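/- Let Ω be a bounded domain in ℝⁿ and let T : W^{-1}(Ω) → W^{1,2}_0(Ω) be the weak solution operator for the Dirichlet Laplacian. Then there exists a kernel function G(x,y) on Ω × Ω satisfying: (a) G ∈ C^∞(Ω × Ω ∖ {(x,x) : x ∈ Ω}); (b) for every y ∈ Ω and every cutoff η_y ∈ C_c^∞(Ω) with η_y ≥ 0 and η_y = 1 on B_ε(y) for some ε > 0, the function (1 − η_y)G(·,y) ∈ W^{1,2}_0(Ω); (c) G(x,y) = G(y,x) for all y ≠ x; (d) G(x,·) ∈ L¹(Ω) for every x ∈ Ω and (Tf)(x) = ∫_Ω G(x,y) f(y) dy for all f ∈ C_c^∞(Ω). -/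

import Mathlib

open MeasureTheory Metric Set Filter Bornology
open scoped ENNReal NNReal Topology RealInnerProductSpace symmDiff

noncomputable section

variable {n : ℕ}

/-- Smooth, compactly supported test functions in an open set `Ω`. -/
def IsTestFun (Ω : Set (EuclideanSpace ℝ (Fin n))) (φ : EuclideanSpace ℝ (Fin n) → ℝ) : Prop :=
  ContDiff ℝ (⊤ : ℕ∞) φ ∧ HasCompactSupport φ ∧ tsupport φ ⊆ Ω

/-- Membership in the Sobolev space `W^{1,p}(Ω)`: the function and its (a.e. defined)
gradient belong to `L^p(Ω)`. -/
def MemW1p (Ω : Set (EuclideanSpace ℝ (Fin n))) (p : ℝ≥0∞)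
    (u : EuclideanSpace ℝ (Fin n) → ℝ) : Prop :=
  MemLp u p (volume.restrict Ω) ∧ MemLp (fun x => gradient u x) p (volume.restrict Ω)

/-- Membership in `W^{1,p}_0(Ω)`: membership in `W^{1,p}(Ω)` together with zero boundary
trace, expressed as approximability by test functions in the `W^{1,p}` norm. -/
def MemW1p0 (Ω : Set (EuclideanSpace ℝ (Fin n))) (p : ℝ≥0∞)
    (u : EuclideanSpace ℝ (Fin n) → ℝ) : Prop :=
  MemW1p Ω p u ∧ ∃ φ : ℕ → EuclideanSpace ℝ (Fin n) → ℝ,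
    (∀ k, IsTestFun Ω (φ k)) ∧
    Tendsto (fun k => eLpNorm (fun x => u x - φ k x) p (volume.restrict Ω)
        + eLpNorm (fun x => gradient u x - gradient (φ k) x) p (volume.restrict Ω))
      atTop (nhds 0)

/-- Membership in `W^{1,2}_0(Ω)`. -/
def MemW120 (Ω : Set (EuclideanSpace ℝ (Fin n))) (u : EuclideanSpace ℝ (Fin n) → ℝ) : Prop :=
  MemW1p0 Ω 2 u

/-- `Δ u = f` holds weakly in `Ω`:
`∫_Ω ∇u · ∇φ = - ∫_Ω f φ` for all test functions `φ ∈ C_c^∞(Ω)`. -/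
def WeakLapEq (Ω : Set (EuclideanSpace ℝ (Fin n))) (f u : EuclideanSpace ℝ (Fin n) → ℝ) : Prop :=
  ∀ φ : EuclideanSpace ℝ (Fin n) → ℝ, IsTestFun Ω φ →
    ∫ x in Ω, ⟪gradient u x, gradient φ x⟫ = - ∫ x in Ω, f x * φ x

/-- `u = OS(g, ψ)` is the obstacle problem solution in `D` with Laplacian data `g` and
boundary data `ψ`: a nonnegative `W^{1,2}(D)` function with `Δu = χ_{{u>0}} g` weakly in `D`
and `u = ψ` on `∂D` (attained continuously). -/
structure IsObstacleSol (D : Set (EuclideanSpace ℝ (Fin n)))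
    (g ψ u : EuclideanSpace ℝ (Fin n) → ℝ) : Prop where
  nonneg : ∀ x ∈ D, 0 ≤ u x
  sobolev : MemW1p D 2 u
  weakEq : WeakLapEq D (Set.indicator {y | 0 < u y} g) u
  contOn : ContinuousOn u (closure D)
  bdry : Set.EqOn u ψ (frontier D)

/-- The contact set `Λ(u) = {x ∈ D : u(x) = 0}`. -/
def contactSet (D : Set (EuclideanSpace ℝ (Fin n)))
    (u : EuclideanSpace ℝ (Fin n) → ℝ) : Set (EuclideanSpace ℝ (Fin n)) :=
  {x ∈ D | u x = 0}

/-- The non-contact set `Ω(u) = {x ∈ D : u(x) > 0}`. -/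
def noncontactSet (D : Set (EuclideanSpace ℝ (Fin n)))
    (u : EuclideanSpace ℝ (Fin n) → ℝ) : Set (EuclideanSpace ℝ (Fin n)) :=
  {x ∈ D | 0 < u x}

/-- `D_{-η} = {x ∈ D : dist(x, ∂D) ≥ η}`. -/
def innerDomain (D : Set (EuclideanSpace ℝ (Fin n))) (η : ℝ) : Set (EuclideanSpace ℝ (Fin n)) :=
  {x ∈ D | η ≤ infDist x (frontier D)}

/-- A bounded Lipschitz domain: a bounded open set whose boundary is locally, after a rigid
motion, the graph of a Lipschitz function (with the domain lying on one side). -/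
def IsLipschitzDomain (D : Set (EuclideanSpace ℝ (Fin n))) : Prop :=
  IsOpen D ∧ IsBounded D ∧
    ∀ x ∈ frontier D,
      ∃ (U : Set (EuclideanSpace ℝ (Fin n)))
        (e : EuclideanSpace ℝ (Fin n) ≃ᵢ EuclideanSpace ℝ (Fin n))
        (φ : (Fin n → ℝ) → ℝ) (L : ℝ≥0) (j : Fin n),
        x ∈ U ∧ IsOpen U ∧ LipschitzWith L φ ∧
        ∀ y ∈ U, (y ∈ D ↔
          φ (Function.update ((EuclideanSpace.equiv (Fin n) ℝ) (e y)) j 0)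
            < (EuclideanSpace.equiv (Fin n) ℝ) (e y) j)

/-- `G` is a Dirichlet Green's function for `D`: for smooth compactly supported right hand
sides, the (continuous representative of the) weak solution of the homogeneous Dirichlet
problem is represented by integration against `G`. -/
def IsGreenFunction (D : Set (EuclideanSpace ℝ (Fin n)))
    (G : EuclideanSpace ℝ (Fin n) → EuclideanSpace ℝ (Fin n) → ℝ) : Prop :=
  ∀ f, IsTestFun D f → ∀ u, MemW120 D u → WeakLapEq D f u → ContinuousOn u D →
    ∀ x ∈ D, u x = ∫ y in D, G x y * f y

/-- `f` is harmonic on `D`: twice differentiable with vanishing Laplacian at each point. -/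
def IsHarmonicOn (f : EuclideanSpace ℝ (Fin n) → ℝ) (D : Set (EuclideanSpace ℝ (Fin n))) : Prop :=
  (∀ x ∈ D, ContDiffAt ℝ 2 f x) ∧
    ∀ x ∈ D, ∑ i : Fin n,
      iteratedFDeriv ℝ 2 f x ![EuclideanSpace.single i 1, EuclideanSpace.single i 1] = 0

/-- `Ξ` is the harmonic extension of the boundary data `φ` to `D`. -/
def IsHarmonicExtension (D : Set (EuclideanSpace ℝ (Fin n)))
    (φ Ξ : EuclideanSpace ℝ (Fin n) → ℝ) : Prop :=
  ContinuousOn Ξ (closure D) ∧ IsHarmonicOn Ξ D ∧ Set.EqOn Ξ φ (frontier D)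

/-- `K` is the Poisson kernel of `D` (with respect to surface measure, i.e. `(n-1)`-dimensional
Hausdorff measure on `∂D`): every harmonic extension of continuous boundary data is recovered
by integrating the boundary data against `K` over `∂D`. -/
def IsPoissonKernel (D : Set (EuclideanSpace ℝ (Fin n)))
    (K : EuclideanSpace ℝ (Fin n) → EuclideanSpace ℝ (Fin n) → ℝ) : Prop :=
  ∀ φ, ContinuousOn φ (frontier D) → ∀ Ξ, IsHarmonicExtension D φ Ξ →
    ∀ y ∈ D, Ξ y = ∫ x in frontier D, φ x * K y x ∂μH[(n : ℝ) - 1]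

/-!
Let `S` be the solution operator of `-Δu = f` on `L²(Ω)`, with zero boundary values, and let
`ρ_{x,t}` be a radial mollifier of radius `t` centred at `x`. Since `-ρ(z) z` is the gradient of a
bump function `ψ`, we have `∂ₜ ρ_{x,t} = t Δψ_{x,t}`, so that `u = S f` satisfies the mean value
formula `∂ₜ ⟪u, ρ_{x,t}⟫ = -t ⟪f, ψ_{x,t}⟫`.

Consequently `⟪S ρ_{x,s}, ρ_{y,t}⟫` does not depend on `s` and `t` as long as the two balls are
disjoint and contained in `Ω`; the common value is `G(x, y)`. It is symmetric because `S` is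
self-adjoint, and smooth because `x ↦ ρ_{x,s}` is smooth with values in `L²(Ω)`. Outside the ball of
radius `s` about `y` the function `G(·, y)` agrees with `S ρ_{y,s} ∈ W₀^{1,2}(Ω)`. Testing with
signs, the mean value formula gives `‖S ρ_{x,r} - S ρ_{x,s}‖₁ = O(r²)` for `s ≤ r`, whence
`G(x, ·) ∈ L¹(Ω)`, and letting `r → 0` in `⟪S f, ρ_{x,r}⟫ = ⟪f, S ρ_{x,r}⟫` yields the
representation of `S f` at its Lebesgue points.
-/

section VariationalProblem

variable {X H K : Type*} [AddCommGroup X] [Module ℝ X]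
  [NormedAddCommGroup H] [InnerProductSpace ℝ H] [NormedAddCommGroup K] [InnerProductSpace ℝ K]
  {t : X →ₗ[ℝ] H} {g : X →ₗ[ℝ] K}

/-- The closure of `{(t x, g x)}` in `H × K`. For `t` the inclusion of the test functions into `L²`
and `g` the gradient, this is the Sobolev space `W₀^{1,2}`, a function being paired with its weak
gradient. -/
def sobolevClosure (t : X →ₗ[ℝ] H) (g : X →ₗ[ℝ] K) : Submodule ℝ (H × K) :=
  (LinearMap.range (t.prod g)).topologicalClosure

theorem mem_sobolevClosure (x : X) : (t x, g x) ∈ sobolevClosure t g :=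
  Submodule.le_topologicalClosure _ ⟨x, rfl⟩

theorem sobolevClosure_induction {P : H × K → Prop} (hP : IsClosed {p | P p})
    (hx : ∀ x, P (t x, g x)) {p : H × K} (hp : p ∈ sobolevClosure t g) : P p := by
  rw [sobolevClosure, ← SetLike.mem_coe, Submodule.topologicalClosure_coe] at hp
  exact closure_minimal (by rintro _ ⟨x, rfl⟩; exact hx x) hP hp

theorem norm_fst_le_of_mem_sobolevClosure {C : ℝ} (hC : ∀ x, ‖t x‖ ≤ C * ‖g x‖) {p : H × K}
    (hp : p ∈ sobolevClosure t g) : ‖p.1‖ ≤ C * ‖p.2‖ :=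
  sobolevClosure_induction (P := fun p => ‖p.1‖ ≤ C * ‖p.2‖)
    (isClosed_le (by fun_prop) (by fun_prop)) hC hp

/-- `u` solves the variational problem with datum `f`, and `w` is the weak gradient of `u`. -/
structure IsVariationalSol (t : X →ₗ[ℝ] H) (g : X →ₗ[ℝ] K) (f u : H) (w : K) : Prop where
  mem : (u, w) ∈ sobolevClosure t g
  weak : ∀ x, ⟪w, g x⟫ = ⟪f, t x⟫

namespace IsVariationalSol

variable {f f' u u' : H} {w w' : K}

theorem weak_of_mem (h : IsVariationalSol t g f u w) {p : H × K}
    (hp : p ∈ sobolevClosure t g) : ⟪w, p.2⟫ = ⟪f, p.1⟫ :=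
  sobolevClosure_induction (P := fun p => ⟪w, p.2⟫ = ⟪f, p.1⟫)
    (isClosed_eq (by fun_prop) (by fun_prop)) h.weak hp

theorem inner_comm (h : IsVariationalSol t g f u w) (h' : IsVariationalSol t g f' u' w') :
    ⟪u, f'⟫ = ⟪f, u'⟫ := by
  rw [← h.weak_of_mem h'.mem, real_inner_comm, ← h'.weak_of_mem h.mem, real_inner_comm]

theorem sub (h : IsVariationalSol t g f u w) (h' : IsVariationalSol t g f' u' w') :
    IsVariationalSol t g (f - f') (u - u') (w - w') where
  mem := (sobolevClosure t g).sub_mem h.mem h'.mem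
  weak x := by rw [inner_sub_left, inner_sub_left, h.weak, h'.weak]

theorem eq_zero {C : ℝ} (hC : ∀ x, ‖t x‖ ≤ C * ‖g x‖) (h : IsVariationalSol t g 0 u w) :
    u = 0 := by
  have hw : w = 0 := by
    rw [← inner_self_eq_zero (𝕜 := ℝ), h.weak_of_mem h.mem, inner_zero_left]
  simpa [hw] using norm_fst_le_of_mem_sobolevClosure hC h.mem

theorem unique {C : ℝ} (hC : ∀ x, ‖t x‖ ≤ C * ‖g x‖) (h : IsVariationalSol t g f u w)
    (h' : IsVariationalSol t g f u' w') : u = u' :=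
  sub_eq_zero.1 (eq_zero hC (by simpa only [sub_self] using h.sub h'))

end IsVariationalSol

/-- The operator is `P ∘ P†`, where `P` sends the gradient `g x` back to `t x`: the weak gradient
`w = P† f` represents the functional `⟪f, t ·⟫`. -/
theorem exists_variational_solution_operator [CompleteSpace H] [CompleteSpace K] {C : ℝ}
    (hC : ∀ x, ‖t x‖ ≤ C * ‖g x‖) :
    ∃ S : H →L[ℝ] H, ∀ f, ∃ w, IsVariationalSol t g f (S f) w := by
  let W : Submodule ℝ K := (LinearMap.range g).topologicalClosure
  have : CompleteSpace W := (Submodule.isClosed_topologicalClosure _).completeSpace_coe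
  let e : X →ₗ[ℝ] W :=
    g.codRestrict W fun x => Submodule.le_topologicalClosure _ (LinearMap.mem_range_self g x)
  have he : DenseRange e := by
    intro w
    have hrange : Subtype.val '' range e = LinearMap.range g := by
      rw [← range_comp, LinearMap.coe_range]; rfl
    rw [closure_subtype, hrange]
    exact w.2
  let P : W →L[ℝ] H := t.extendOfNorm e
  have hP : ∀ x, P (e x) = t x := LinearMap.extendOfNorm_eq he ⟨C, hC⟩
  have hmem : ∀ w : W, (P w, (w : K)) ∈ sobolevClosure t g := fun w =>
    he.induction_on (p := fun w : W => (P w, (w : K)) ∈ sobolevClosure t g) w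
      ((Submodule.isClosed_topologicalClosure _).preimage (by fun_prop))
      fun x => by rw [hP]; exact mem_sobolevClosure x
  let Q : H →L[ℝ] W := ContinuousLinearMap.adjoint P
  refine ⟨P ∘L Q, fun f => ⟨Q f, hmem _, fun x => ?_⟩⟩
  have hadj : ⟪Q f, e x⟫ = ⟪f, P (e x)⟫ := ContinuousLinearMap.adjoint_inner_left P (e x) f
  rwa [hP] at hadj

end VariationalProblem

section SmoothFamilies

open BoundedContinuousFunction

theorem continuousOn_boundedContinuousFunction {P E V : Type*} [TopologicalSpace P]
    [TopologicalSpace E] [NormedAddCommGroup V] {F : P → E →ᵇ V} {s : Set P} {K : Set E}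
    (hK : IsCompact K) (hF : ContinuousOn (fun q : P × E => F q.1 q.2) (s ×ˢ univ))
    (hsupp : ∀ p ∈ s, ∀ z ∉ K, F p z = 0) : ContinuousOn F s := by
  intro p hp
  refine Metric.tendsto_nhds.2 fun ε hε => ?_
  obtain ⟨v, hv, hvK⟩ := hK.mem_uniformity_of_prod (f := fun p z => F p z)
    (hF.mono (prod_mono_right (subset_univ K))) hp (dist_mem_uniformity (half_pos hε))
  filter_upwards [hv, self_mem_nhdsWithin] with p' hp' hp's
  refine ((dist_le (half_pos hε).le).2 fun z => ?_).trans_lt (half_lt_self hε)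
  by_cases hz : z ∈ K
  · exact (hvK p' hp' z hz).le
  · rw [hsupp p' hp's z hz, hsupp p hp z hz, dist_self]
    exact (half_pos hε).le

variable {P E V : Type*} [NormedAddCommGroup P] [NormedSpace ℝ P] [NormedAddCommGroup V]
  [NormedSpace ℝ V]

/-- An operator-valued bounded continuous function, as an operator into the bounded continuous
functions. -/
def flipBounded [TopologicalSpace E] : (E →ᵇ (P →L[ℝ] V)) →L[ℝ] P →L[ℝ] (E →ᵇ V) :=
  (LinearMap.mkContinuous₂
    (LinearMap.mk₂ ℝ
      (fun h (A : E →ᵇ (P →L[ℝ] V)) =>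
        (ContinuousLinearMap.apply ℝ V h).compLeftContinuousBounded E A)
      (fun _ _ _ => by ext; simp) (fun _ _ _ => by ext; simp)
      (fun _ _ _ => by ext; simp) (fun _ _ _ => by ext; simp))
    1 fun h A => by
      refine (norm_le (by positivity)).2 fun z => ?_
      calc ‖A z h‖ ≤ ‖A z‖ * ‖h‖ := (A z).le_opNorm h
        _ ≤ 1 * ‖h‖ * ‖A‖ := by
          rw [one_mul, mul_comm]; gcongr; exact A.norm_coe_le_norm z).flip

theorem hasFDerivAt_boundedContinuousFunction [TopologicalSpace E] {F : P → E →ᵇ V}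
    {F' : P → E →ᵇ (P →L[ℝ] V)} {p : P} (hF' : ContinuousAt F' p)
    (h : ∀ᶠ p' in 𝓝 p, ∀ z, HasFDerivAt (fun p => F p z) (F' p' z) p') :
    HasFDerivAt F (flipBounded (F' p)) p := by
  refine hasFDerivAt_iff_isLittleO.2 (Asymptotics.isLittleO_iff.2 fun ε hε => ?_)
  obtain ⟨δ, hδ, hball⟩ := Metric.eventually_nhds_iff_ball.1
    (h.and (Metric.continuousAt_iff'.1 hF' ε hε))
  filter_upwards [ball_mem_nhds p hδ] with q hq
  refine (norm_le (by positivity)).2 fun z => ?_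
  have hbound : ∀ p' ∈ ball p δ, ‖F' p' z - F' p z‖ ≤ ε := fun p' hp' =>
    (dist_eq_norm (F' p' z) (F' p z)).symm.trans_le
      ((dist_coe_le_dist z).trans (hball p' hp').2.le)
  exact (convex_ball p δ).norm_image_sub_le_of_norm_hasFDerivWithin_le'
    (fun p' hp' => ((hball p' hp').1 z).hasFDerivWithinAt) hbound (mem_ball_self hδ) hq

variable [NormedAddCommGroup E] [NormedSpace ℝ E]

theorem exists_boundedContinuousFunction_fderiv {F : P → E →ᵇ V} {s : Set P} {K : Set E}
    (hs : IsOpen s) (hK : IsCompact K) {m : WithTop ℕ∞}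
    (hF : ContDiffOn ℝ (m + 1) (fun q : P × E => F q.1 q.2) (s ×ˢ univ))
    (hsupp : ∀ p ∈ s, ∀ z ∉ K, F p z = 0) :
    ∃ F' : P → E →ᵇ (P →L[ℝ] V),
      ContDiffOn ℝ m (fun q : P × E => F' q.1 q.2) (s ×ˢ univ) ∧
      (∀ p ∈ s, ∀ z ∉ K, F' p z = 0) ∧
      ∀ p ∈ s, ∀ z, HasFDerivAt (fun p => F p z) (F' p z) p := by
  have hopen : IsOpen (s ×ˢ (univ : Set E)) := hs.prod isOpen_univ
  let D : P × E → P →L[ℝ] V := fun q =>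
    (fderiv ℝ (fun q : P × E => F q.1 q.2) q).comp (ContinuousLinearMap.inl ℝ P E)
  have hD : ContDiffOn ℝ m D (s ×ˢ univ) :=
    (hF.fderiv_of_isOpen hopen le_rfl).clm_comp contDiffOn_const
  have hderiv : ∀ p ∈ s, ∀ z, HasFDerivAt (fun p => F p z) (D (p, z)) p := fun p hp z => by
    have hdiff : DifferentiableAt ℝ (fun q : P × E => F q.1 q.2) (p, z) :=
      (hF.differentiableOn (by simp)).differentiableAt (hopen.mem_nhds ⟨hp, mem_univ z⟩)
    exact HasFDerivAt.comp (g := fun q : P × E => F q.1 q.2) p hdiff.hasFDerivAt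
      (f := fun p => (p, z)) (hasFDerivAt_prodMk_left (𝕜 := ℝ) p z)
  have hDsupp : ∀ p ∈ s, ∀ z ∉ K, D (p, z) = 0 := fun p hp z hz =>
    (hderiv p hp z).unique ((hasFDerivAt_const (0 : V) p).congr_of_eventuallyEq
      (eventually_of_mem (hs.mem_nhds hp) fun p' hp' => hsupp p' hp' z hz))
  have hbdd : ∀ p ∈ s, ∃ A : E →ᵇ (P →L[ℝ] V), ∀ z, A z = D (p, z) := fun p hp => by
    have hcont : Continuous fun z => D (p, z) :=
      hD.continuousOn.comp_continuous (by fun_prop) fun z => ⟨hp, mem_univ z⟩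
    obtain ⟨C, hC⟩ :=
      (HasCompactSupport.intro hK (hDsupp p hp)).exists_bound_of_continuous hcont
    exact ⟨ofNormedAddCommGroup _ hcont C hC, fun _ => rfl⟩
  choose! F' hF' using hbdd
  exact ⟨F', hD.congr fun q hq => hF' q.1 hq.1 q.2, fun p hp z hz => by
    rw [hF' p hp, hDsupp p hp z hz], fun p hp z => by rw [hF' p hp]; exact hderiv p hp z⟩

end SmoothFamilies

section SmoothFamiliesInduction

open BoundedContinuousFunction

universe u

variable {P : Type u} {E : Type*} [NormedAddCommGroup P] [NormedSpace ℝ P]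
  [NormedAddCommGroup E] [NormedSpace ℝ E]

/-- The codomain changes from `V` to `P →L[ℝ] V` in the induction, so both have to live in the
universe of `P`. -/
theorem contDiffOn_boundedContinuousFunction_nat (m : ℕ) {s : Set P} {K : Set E}
    (hs : IsOpen s) (hK : IsCompact K) :
    ∀ {V : Type u} [NormedAddCommGroup V] [NormedSpace ℝ V] {F : P → E →ᵇ V},
      ContDiffOn ℝ m (fun q : P × E => F q.1 q.2) (s ×ˢ univ) →
      (∀ p ∈ s, ∀ z ∉ K, F p z = 0) → ContDiffOn ℝ m F s := by
  induction m with
  | zero =>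
    intro V _ _ F hF hsupp
    exact contDiffOn_zero.2 (continuousOn_boundedContinuousFunction hK hF.continuousOn hsupp)
  | succ m ih =>
    intro V _ _ F hF hsupp
    obtain ⟨F', hF', hsupp', hderiv⟩ :=
      exists_boundedContinuousFunction_fderiv hs hK (m := m) (by exact_mod_cast hF) hsupp
    have hcont : ContinuousOn F' s :=
      continuousOn_boundedContinuousFunction hK hF'.continuousOn hsupp'
    have hFderiv : ∀ p ∈ s, HasFDerivAt F (flipBounded (F' p)) p := fun p hp =>
      hasFDerivAt_boundedContinuousFunction (hcont.continuousAt (hs.mem_nhds hp))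
        (eventually_of_mem (hs.mem_nhds hp) hderiv)
    push_cast
    refine (contDiffOn_succ_iff_hasFDerivWithinAt_of_uniqueDiffOn hs.uniqueDiffOn).2
      ⟨by simp, fun p => flipBounded (F' p), ?_, fun p hp => (hFderiv p hp).hasFDerivWithinAt⟩
    exact flipBounded.contDiff.comp_contDiffOn (ih hF' hsupp')

theorem contDiffOn_boundedContinuousFunction {V : Type u} [NormedAddCommGroup V]
    [NormedSpace ℝ V] {F : P → E →ᵇ V} {s : Set P} {K : Set E} (hs : IsOpen s)
    (hK : IsCompact K) (hF : ContDiffOn ℝ (⊤ : ℕ∞) (fun q : P × E => F q.1 q.2) (s ×ˢ univ))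
    (hsupp : ∀ p ∈ s, ∀ z ∉ K, F p z = 0) : ContDiffOn ℝ (⊤ : ℕ∞) F s :=
  contDiffOn_infty.2 fun m => contDiffOn_boundedContinuousFunction_nat m hs hK
    (hF.of_le (by exact_mod_cast le_top)) hsupp

end SmoothFamiliesInduction

section Poincare

theorem integral_norm_mul_norm_le_sqrt_mul_sqrt {α F F' : Type*} [MeasurableSpace α]
    [NormedAddCommGroup F] [NormedAddCommGroup F'] {μ : Measure α} {f : α → F} {g : α → F'}
    (hf : MemLp f 2 μ) (hg : MemLp g 2 μ) :
    ∫ x, ‖f x‖ * ‖g x‖ ∂μ ≤ √(∫ x, ‖f x‖ ^ 2 ∂μ) * √(∫ x, ‖g x‖ ^ 2 ∂μ) := by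
  have h := integral_mul_norm_le_Lp_mul_Lq Real.HolderConjugate.two_two
    (by simpa using hf.norm) (by simpa using hg.norm)
  simpa [Real.sqrt_eq_rpow] using h

theorem sq_integral_norm_le {α F : Type*} [MeasurableSpace α] [NormedAddCommGroup F]
    {μ : Measure α} [IsFiniteMeasure μ] {f : α → F} (hf : MemLp f 2 μ) :
    (∫ x, ‖f x‖ ∂μ) ^ 2 ≤ μ.real univ * ∫ x, ‖f x‖ ^ 2 ∂μ := by
  have h := integral_norm_mul_norm_le_sqrt_mul_sqrt (memLp_const (1 : ℝ)) hf
  simp only [norm_one, one_mul, one_pow, integral_const, smul_eq_mul, mul_one] at h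
  calc (∫ x, ‖f x‖ ∂μ) ^ 2 ≤ (√(μ.real univ) * √(∫ x, ‖f x‖ ^ 2 ∂μ)) ^ 2 := by gcongr
    _ = μ.real univ * ∫ x, ‖f x‖ ^ 2 ∂μ := by
      rw [mul_pow, Real.sq_sqrt measureReal_nonneg, Real.sq_sqrt (by positivity)]

open scoped Convolution

variable {E : Type*} [MeasurableSpace E] [NormedAddCommGroup E] {μ : Measure E} {φ : E → ℝ}

/-- The autocorrelation `z ↦ ∫ φ(x) φ(x + z) dx`, written as a convolution. -/
def autocorrelation (μ : Measure E) (φ : E → ℝ) : E → ℝ :=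
  (fun x => φ (-x)) ⋆[ContinuousLinearMap.mul ℝ ℝ, μ] φ

theorem autocorrelation_le_convolution_norm (z : E) :
    autocorrelation μ φ z ≤
      ((fun x => ‖φ (-x)‖) ⋆[ContinuousLinearMap.mul ℝ ℝ, μ] fun x => ‖φ x‖) z := by
  refine (le_abs_self _).trans ((abs_integral_le_integral_abs).trans_eq ?_)
  simp [convolution, abs_mul]

variable [NormedSpace ℝ E] [FiniteDimensional ℝ E]
  [BorelSpace E] [μ.IsAddHaarMeasure]

theorem autocorrelation_zero : autocorrelation μ φ 0 = ∫ x, ‖φ x‖ ^ 2 ∂μ := by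
  rw [← integral_neg_eq_self]
  simp [autocorrelation, convolution, sq]

theorem norm_fderiv_autocorrelation_le (hφ : ContDiff ℝ 1 φ) (hc : HasCompactSupport φ) (z : E) :
    ‖fderiv ℝ (autocorrelation μ φ) z‖ ≤
      √(∫ x, ‖φ x‖ ^ 2 ∂μ) * √(∫ x, ‖fderiv ℝ φ x‖ ^ 2 ∂μ) := by
  have hneg : Continuous fun x => φ (-x) := hφ.continuous.comp continuous_neg
  have hderiv := hc.hasFDerivAt_convolution_right (ContinuousLinearMap.mul ℝ ℝ)
    (hneg.locallyIntegrable (μ := μ)) hφ z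
  have hfst : MemLp (fun x => φ (-x)) 2 μ :=
    hneg.memLp_of_hasCompactSupport (hc.comp_homeomorph (Homeomorph.neg E))
  have hsnd : MemLp (fun x => fderiv ℝ φ (z - x)) 2 μ :=
    ((hφ.continuous_fderiv one_ne_zero).comp (by fun_prop)).memLp_of_hasCompactSupport
      ((hc.fderiv ℝ).comp_homeomorph (Homeomorph.subLeft z))
  rw [autocorrelation, hderiv.fderiv]
  calc _ ≤ ∫ x, ‖φ (-x)‖ * ‖fderiv ℝ φ (z - x)‖ ∂μ := by
        refine (norm_integral_le_integral_norm _).trans_eq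
          (integral_congr_ae (ae_of_all _ fun x => ?_))
        have happly : ContinuousLinearMap.precompR E (ContinuousLinearMap.mul ℝ ℝ) (φ (-x))
            (fderiv ℝ φ (z - x)) = φ (-x) • fderiv ℝ φ (z - x) := by ext; simp
        simp only [happly, norm_smul]
    _ ≤ _ := integral_norm_mul_norm_le_sqrt_mul_sqrt hfst hsnd
    _ = _ := by
        rw [integral_neg_eq_self (fun x => ‖φ x‖ ^ 2) μ,
          integral_sub_left_eq_self (fun x => ‖fderiv ℝ φ x‖ ^ 2) μ z]

theorem sub_le_autocorrelation (hφ : ContDiff ℝ 1 φ) (hc : HasCompactSupport φ) (z : E) :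
    ∫ x, ‖φ x‖ ^ 2 ∂μ - √(∫ x, ‖φ x‖ ^ 2 ∂μ) * √(∫ x, ‖fderiv ℝ φ x‖ ^ 2 ∂μ) * ‖z‖ ≤
      autocorrelation μ φ z := by
  have hdiff : Differentiable ℝ (autocorrelation μ φ) := fun z =>
    (hc.hasFDerivAt_convolution_right (ContinuousLinearMap.mul ℝ ℝ)
      ((hφ.continuous.comp continuous_neg).locallyIntegrable (μ := μ)) hφ z).differentiableAt
  have h := convex_univ.norm_image_sub_le_of_norm_fderiv_le (fun z _ => hdiff z)
    (fun z _ => norm_fderiv_autocorrelation_le hφ hc z) (mem_univ 0) (mem_univ z)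
  rw [autocorrelation_zero, sub_zero] at h
  linarith [(abs_le.1 h).1]

theorem integrable_autocorrelation (hφ : Continuous φ) (hc : HasCompactSupport φ) :
    Integrable (autocorrelation μ φ) μ :=
  have hint : Integrable φ μ := hφ.integrable_of_hasCompactSupport hc
  hint.comp_neg.integrable_convolution _ hint

theorem setIntegral_autocorrelation_le (hφ : Continuous φ) (hc : HasCompactSupport φ)
    (s : Set E) : ∫ z in s, autocorrelation μ φ z ∂μ ≤ (∫ x, ‖φ x‖ ∂μ) ^ 2 := by
  have hint : Integrable (fun x => ‖φ x‖) μ := (hφ.integrable_of_hasCompactSupport hc).norm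
  have hconv : Integrable
      ((fun x => ‖φ (-x)‖) ⋆[ContinuousLinearMap.mul ℝ ℝ, μ] fun x => ‖φ x‖) μ :=
    hint.comp_neg.integrable_convolution _ hint
  calc ∫ z in s, autocorrelation μ φ z ∂μ
      ≤ ∫ z in s, ((fun x => ‖φ (-x)‖) ⋆[ContinuousLinearMap.mul ℝ ℝ, μ] fun x => ‖φ x‖) z ∂μ := by
        exact integral_mono (integrable_autocorrelation hφ hc).integrableOn hconv.integrableOn
          autocorrelation_le_convolution_norm
    _ ≤ ∫ z, ((fun x => ‖φ (-x)‖) ⋆[ContinuousLinearMap.mul ℝ ℝ, μ] fun x => ‖φ x‖) z ∂μ :=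
        setIntegral_le_integral hconv (ae_of_all _ fun z => integral_nonneg fun x =>
          mul_nonneg (norm_nonneg _) (norm_nonneg _))
    _ = (∫ x, ‖φ x‖ ∂μ) ^ 2 := by
        rw [integral_convolution _ hint.comp_neg hint, integral_neg_eq_self (fun x => ‖φ x‖) μ,
          ContinuousLinearMap.mul_apply', sq]

theorem exists_measureReal_closedBall_ge [Nontrivial E] (μ : Measure E) [μ.IsAddHaarMeasure]
    (a : ℝ) : ∃ R, 0 ≤ R ∧ a ≤ μ.real (closedBall 0 R) := by
  have hv : 0 < μ.real (ball (0 : E) 1) :=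
    ENNReal.toReal_pos (measure_ball_pos μ 0 one_pos).ne' measure_ball_lt_top.ne
  obtain ⟨R, hR1, hRa⟩ : ∃ R : ℝ, 1 ≤ R ∧ a / μ.real (ball (0 : E) 1) ≤ R :=
    ⟨max 1 _, le_max_left _ _, le_max_right _ _⟩
  have hR0 : 0 ≤ R := zero_le_one.trans hR1
  refine ⟨R, hR0, ?_⟩
  calc a ≤ R * μ.real (ball (0 : E) 1) := (div_le_iff₀ hv).1 hRa
    _ ≤ R ^ Module.finrank ℝ E * μ.real (ball (0 : E) 1) := by
      gcongr; exact le_self_pow₀ hR1 Module.finrank_pos.ne'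
    _ = μ.real (closedBall 0 R) := by
      rw [measureReal_def, measureReal_def, Measure.addHaar_closedBall μ 0 hR0, ENNReal.toReal_mul,
        ENNReal.toReal_ofReal (by positivity)]

/-- For `‖z‖ ≤ R` the autocorrelation is at least `‖φ‖² - R ‖φ‖ ‖Dφ‖`, while its integral is at most
`‖φ‖₁² ≤ μ(Ω) ‖φ‖²`; it remains to choose a ball of volume at least `2 μ(Ω)`. -/
theorem exists_poincare_const [Nontrivial E] (μ : Measure E) [μ.IsAddHaarMeasure] {Ω : Set E}
    (hΩ : μ Ω ≠ ∞) :
    ∃ C, ∀ φ : E → ℝ, ContDiff ℝ 1 φ → HasCompactSupport φ → Function.support φ ⊆ Ω →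
      √(∫ x, ‖φ x‖ ^ 2 ∂μ) ≤ C * √(∫ x, ‖fderiv ℝ φ x‖ ^ 2 ∂μ) := by
  obtain ⟨R, hR, hvol⟩ := exists_measureReal_closedBall_ge (E := E) μ (2 * (μ.real Ω + 1))
  refine ⟨2 * R, fun φ hφ hc hsupp => ?_⟩
  set A := √(∫ x, ‖φ x‖ ^ 2 ∂μ)
  set B := √(∫ x, ‖fderiv ℝ φ x‖ ^ 2 ∂μ)
  set V := μ.real (closedBall (0 : E) R)
  have hA : ∫ x, ‖φ x‖ ^ 2 ∂μ = A ^ 2 := (Real.sq_sqrt (by positivity)).symm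
  have hlower : V * (A ^ 2 - A * B * R) ≤ ∫ z in closedBall 0 R, autocorrelation μ φ z ∂μ := by
    rw [← smul_eq_mul, ← setIntegral_const]
    refine setIntegral_mono_on (integrableOn_const measure_closedBall_lt_top.ne)
      (integrable_autocorrelation hφ.continuous hc).integrableOn measurableSet_closedBall
      fun z hz => ?_
    have hz' : A * B * ‖z‖ ≤ A * B * R := by gcongr; exact mem_closedBall_zero_iff.1 hz
    linarith [sub_le_autocorrelation (μ := μ) hφ hc z]
  have hupper : (∫ x, ‖φ x‖ ∂μ) ^ 2 ≤ μ.real Ω * A ^ 2 := by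
    have : IsFiniteMeasure (μ.restrict Ω) := isFiniteMeasure_restrict.2 hΩ
    have hvanish : ∀ x ∉ Ω, φ x = 0 := fun x hx => Function.notMem_support.1 fun h => hx (hsupp h)
    have h := sq_integral_norm_le
      ((hφ.continuous.memLp_of_hasCompactSupport (μ := μ) (p := 2) hc).restrict Ω)
    rwa [setIntegral_eq_integral_of_forall_compl_eq_zero fun x hx => by simp [hvanish x hx],
      setIntegral_eq_integral_of_forall_compl_eq_zero fun x hx => by simp [hvanish x hx],
      hA, measureReal_restrict_apply_univ] at h
  have hAB : V * (A - B * R) * A ≤ μ.real Ω * A * A := by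
    linarith [setIntegral_autocorrelation_le (μ := μ) hφ.continuous hc (closedBall 0 R)]
  obtain hzero | hpos : A = 0 ∨ 0 < A := (Real.sqrt_nonneg _).eq_or_lt'
  · rw [hzero]; positivity
  · have := le_of_mul_le_mul_right hAB hpos
    by_contra! hlt
    nlinarith [measureReal_nonneg (μ := μ) (s := Ω)]

end Poincare

section RescaledKernels

open BoundedContinuousFunction

variable {E : Type*} [NormedAddCommGroup E] [NormedSpace ℝ E]

/-- The function `z ↦ t⁻ᵈ ρ((z - x) / t)`, where `d` is the dimension of the space. -/
def rescale (ρ : E →ᵇ ℝ) (t : ℝ) (x : E) : E →ᵇ ℝ :=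
  (t ^ Module.finrank ℝ E)⁻¹ • ρ.compContinuous ⟨fun z => t⁻¹ • (z - x), by fun_prop⟩

theorem rescale_apply (ρ : E →ᵇ ℝ) (t : ℝ) (x z : E) :
    rescale ρ t x z = (t ^ Module.finrank ℝ E)⁻¹ * ρ (t⁻¹ • (z - x)) := rfl

theorem rescale_eq_zero {ρ : E →ᵇ ℝ} (hρ : ∀ z, 1 < ‖z‖ → ρ z = 0) {t : ℝ} (ht : 0 < t)
    {x z : E} (hz : z ∉ closedBall x t) : rescale ρ t x z = 0 := by
  have hnorm : 1 < ‖t⁻¹ • (z - x)‖ := by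
    rw [norm_smul, norm_inv, Real.norm_of_nonneg ht.le, ← dist_eq_norm, ← div_eq_inv_mul,
      one_lt_div ht]
    simpa using hz
  rw [rescale_apply, hρ _ hnorm, mul_zero]

theorem abs_rescale_le (ρ : E →ᵇ ℝ) {t : ℝ} (ht : 0 < t) (x z : E) :
    |rescale ρ t x z| ≤ (t ^ Module.finrank ℝ E)⁻¹ * ‖ρ‖ := by
  rw [rescale_apply, abs_mul, abs_of_pos (by positivity)]
  gcongr
  exact ρ.norm_coe_le_norm _

theorem contDiff_rescale {ρ : E →ᵇ ℝ} {m : WithTop ℕ∞} (hρ : ContDiff ℝ m ρ) (t : ℝ) (x : E) :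
    ContDiff ℝ m (rescale ρ t x) :=
  contDiff_const.mul (hρ.comp (contDiff_const.smul (contDiff_id.sub contDiff_const)))

theorem tsupport_rescale_subset {ρ : E →ᵇ ℝ} (hρ : ∀ z, 1 < ‖z‖ → ρ z = 0) {t : ℝ} (ht : 0 < t)
    (x : E) : tsupport (rescale ρ t x) ⊆ closedBall x t :=
  closure_minimal (fun _ => not_imp_comm.1 (rescale_eq_zero hρ ht)) isClosed_closedBall

variable [FiniteDimensional ℝ E]

theorem hasCompactSupport_rescale {ρ : E →ᵇ ℝ} (hρ : ∀ z, 1 < ‖z‖ → ρ z = 0) {t : ℝ}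
    (ht : 0 < t) (x : E) : HasCompactSupport (rescale ρ t x) :=
  HasCompactSupport.intro (isCompact_closedBall x t) fun _ => rescale_eq_zero hρ ht

theorem contDiffAt_rescale {E : Type} [NormedAddCommGroup E] [NormedSpace ℝ E]
    [FiniteDimensional ℝ E] {ρ : E →ᵇ ℝ} (hρ : ∀ z, 1 < ‖z‖ → ρ z = 0)
    (hsmooth : ContDiff ℝ (⊤ : ℕ∞) ρ) {t : ℝ} (ht : 0 < t) (x : E) :
    ContDiffAt ℝ (⊤ : ℕ∞) (fun p : ℝ × E => rescale ρ p.1 p.2) (t, x) := by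
  have hopen : IsOpen (Ioo 0 (t + 1) ×ˢ ball x 1) := isOpen_Ioo.prod isOpen_ball
  refine (contDiffOn_boundedContinuousFunction (K := closedBall x (1 + (t + 1))) hopen
    (isCompact_closedBall _ _) ?_ ?_).contDiffAt
    (hopen.mem_nhds ⟨⟨ht, lt_add_one t⟩, mem_ball_self one_pos⟩)
  · have hne : ∀ q ∈ (Ioo 0 (t + 1) ×ˢ ball x 1) ×ˢ (univ : Set E), q.1.1 ≠ 0 :=
      fun q hq => hq.1.1.1.ne'
    have hfst : ContDiff ℝ (⊤ : ℕ∞) fun q : (ℝ × E) × E => q.1.1 := contDiff_fst.fst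
    exact ((hfst.pow _).contDiffOn.inv fun q hq => pow_ne_zero _ (hne q hq)).mul
      (hsmooth.comp_contDiffOn ((hfst.contDiffOn.inv hne).smul
        (contDiff_snd.sub contDiff_fst.snd).contDiffOn))
  · rintro ⟨τ, x'⟩ ⟨hτ, hx'⟩ z hz
    refine rescale_eq_zero hρ hτ.1 fun hz' => hz (mem_closedBall.2 ?_)
    linarith [dist_triangle z x' x, mem_closedBall.1 hz', mem_ball.1 hx', hτ.2]

variable [MeasurableSpace E] [BorelSpace E] {μ : Measure E} [μ.IsAddHaarMeasure]

theorem integral_comp_rescale_smul {F : Type*} [NormedAddCommGroup F] [NormedSpace ℝ F]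
    (ρ : E →ᵇ ℝ) {t : ℝ} (ht : 0 < t) (x : E) (f : E → F) :
    ∫ z, rescale ρ t x z • f z ∂μ = ∫ z, ρ z • f (x + t • z) ∂μ := by
  have hscale := Measure.integral_comp_inv_smul_of_nonneg μ
    (fun z => ρ z • f (x + t • z)) ht.le
  rw [← integral_add_right_eq_self _ x]
  simp only [rescale_apply, add_sub_cancel_right, mul_smul, integral_smul]
  rw [inv_smul_eq_iff₀ (by positivity), ← hscale]
  simp only [smul_inv_smul₀ ht.ne', add_comm x]

theorem integral_rescale (ρ : E →ᵇ ℝ) {t : ℝ} (ht : 0 < t) (x : E) :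
    ∫ z, rescale ρ t x z ∂μ = ∫ z, ρ z ∂μ := by
  simpa using integral_comp_rescale_smul (μ := μ) ρ ht x fun _ => (1 : ℝ)

theorem integral_abs_rescale (ρ : E →ᵇ ℝ) {t : ℝ} (ht : 0 < t) (x : E) :
    ∫ z, |rescale ρ t x z| ∂μ = ∫ z, |ρ z| ∂μ := by
  refine Eq.trans (integral_congr_ae (ae_of_all _ fun z => ?_)) (integral_rescale |ρ| ht x)
  simp only [rescale_apply, coe_abs, Pi.abs_apply, abs_mul, abs_of_pos (inv_pos.2 (pow_pos ht _))]

theorem hasDerivAt_integral_mul_comp_add_smul {E : Type*} [NormedAddCommGroup E]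
    [NormedSpace ℝ E] [MeasurableSpace E] [OpensMeasurableSpace E] {μ : Measure E}
    [IsFiniteMeasureOnCompacts μ] {ρ v : E → ℝ} (hρ : Continuous ρ)
    (hρc : HasCompactSupport ρ) (hv : ContDiff ℝ 1 v) (hvc : HasCompactSupport v) (x : E) (t : ℝ) :
    HasDerivAt (fun t : ℝ => ∫ z, ρ z * v (x + t • z) ∂μ)
      (∫ z, ρ z * fderiv ℝ v (x + t • z) z ∂μ) t := by
  have hDv : Continuous (fderiv ℝ v) := hv.continuous_fderiv one_ne_zero
  obtain ⟨B, hB⟩ := (hvc.fderiv ℝ).exists_bound_of_continuous hDv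
  have hcont : ∀ t : ℝ, Continuous fun z => ρ z * v (x + t • z) := fun t =>
    hρ.mul (hv.continuous.comp (by fun_prop))
  have hcont' : Continuous fun z => ρ z * fderiv ℝ v (x + t • z) z :=
    hρ.mul ((hDv.comp (by fun_prop)).clm_apply continuous_id)
  have hbound : Integrable (fun z => ‖ρ z‖ * (B * ‖z‖)) μ :=
    (hρ.norm.mul (by fun_prop)).integrable_of_hasCompactSupport hρc.norm.mul_right
  refine (hasDerivAt_integral_of_dominated_loc_of_deriv_le univ_mem
    (F' := fun t z => ρ z * fderiv ℝ v (x + t • z) z)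
    (Eventually.of_forall fun t => (hcont t).aestronglyMeasurable)
    ((hcont t).integrable_of_hasCompactSupport hρc.mul_right) hcont'.aestronglyMeasurable
    (ae_of_all _ fun z t _ => ?_) hbound (ae_of_all _ fun z t _ => ?_)).2
  · rw [norm_mul]
    gcongr
    exact ContinuousLinearMap.le_of_opNorm_le _ (hB _) z
  · have hline : HasDerivAt (fun t : ℝ => x + t • z) z t := by
      simpa using ((hasDerivAt_id t).smul_const z).const_add x
    exact ((hv.differentiable one_ne_zero _).hasFDerivAt.comp_hasDerivAt t hline).const_mul (ρ z)

theorem hasDerivAt_integral_rescale_mul {ρ : E →ᵇ ℝ} (hρ : HasCompactSupport ρ) {v : E → ℝ}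
    (hv : ContDiff ℝ 1 v) (hvc : HasCompactSupport v) {t : ℝ} (ht : 0 < t) (x : E) :
    HasDerivAt (fun t => ∫ z, rescale ρ t x z * v z ∂μ)
      (∫ z, rescale ρ t x z * fderiv ℝ v z (t⁻¹ • (z - x)) ∂μ) t := by
  have hderiv := integral_comp_rescale_smul (μ := μ) ρ ht x
    fun z => fderiv ℝ v z (t⁻¹ • (z - x))
  simp only [smul_eq_mul, add_sub_cancel_left, inv_smul_smul₀ ht.ne'] at hderiv
  rw [hderiv]
  refine (hasDerivAt_integral_mul_comp_add_smul ρ.continuous hρ hv hvc x t).congr_of_eventuallyEq ?_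
  filter_upwards [lt_mem_nhds ht] with s hs
  exact integral_comp_rescale_smul ρ hs x v

theorem ae_tendsto_integral_rescale_smul {ρ : E →ᵇ ℝ} (hρ : ∀ z, 1 < ‖z‖ → ρ z = 0)
    (hint : ∫ z, ρ z ∂μ = 1) {f : E → ℝ} (hf : Integrable f μ) :
    ∀ᵐ x ∂μ, Tendsto (fun t => ∫ z, rescale ρ t x z • f z ∂μ) (𝓝[>] 0) (𝓝 (f x)) := by
  have hvol : 0 < μ.real (ball 0 1) :=
    ENNReal.toReal_pos (measure_ball_pos _ _ one_pos).ne' measure_ball_lt_top.ne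
  filter_upwards [(Besicovitch.vitaliFamily μ).ae_tendsto_average_norm_sub
    hf.locallyIntegrable] with x hx
  refine tendsto_integral_smul_of_tendsto_average_norm_sub (‖ρ‖ * μ.real (ball 0 1))
    (hx.comp (Besicovitch.tendsto_filterAt μ x)) (Eventually.of_forall fun t => hf.integrableOn)
    (tendsto_const_nhds.congr' ?_) ?_ ?_
  · filter_upwards [self_mem_nhdsWithin] with t ht
    rw [integral_rescale ρ ht, hint]
  · filter_upwards [self_mem_nhdsWithin] with t ht z
    exact not_imp_comm.1 (rescale_eq_zero hρ ht)
  · filter_upwards [self_mem_nhdsWithin] with t ht z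
    have ht : 0 < t := ht
    rw [Measure.addHaar_real_closedBall _ _ ht.le, mul_div_mul_right _ _ hvol.ne', div_eq_inv_mul]
    exact abs_rescale_le ρ ht x z

end RescaledKernels

section UnitBallSupport

open BoundedContinuousFunction

variable {E : Type*} [NormedAddCommGroup E] [NormedSpace ℝ E] [FiniteDimensional ℝ E]

theorem hasCompactSupport_of_forall_one_lt_norm {f : E → ℝ} (hf : ∀ z, 1 < ‖z‖ → f z = 0) :
    HasCompactSupport f :=
  HasCompactSupport.intro (isCompact_closedBall 0 1) fun z hz => hf z (by simpa using hz)

theorem exists_coe_eq_of_forall_one_lt_norm {f : E → ℝ} (hf : Continuous f)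
    (hf0 : ∀ z, 1 < ‖z‖ → f z = 0) : ∃ F : E →ᵇ ℝ, ⇑F = f := by
  obtain ⟨C, hC⟩ := (hasCompactSupport_of_forall_one_lt_norm hf0).exists_bound_of_continuous hf
  exact ⟨ofNormedAddCommGroup f hf C hC, rfl⟩

end UnitBallSupport

section RadialProfile

/-- A smooth cutoff in the variable `q = ‖z‖²`, from which radial mollifiers are built. -/
def radialProfile (q : ℝ) : ℝ := Real.smoothTransition (1 - q)

theorem contDiff_radialProfile : ContDiff ℝ (⊤ : ℕ∞) radialProfile :=
  Real.smoothTransition.contDiff.comp (contDiff_const.sub contDiff_id)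

theorem contDiff_deriv_radialProfile : ContDiff ℝ (⊤ : ℕ∞) (deriv radialProfile) :=
  (contDiff_infty_iff_deriv.1 contDiff_radialProfile).2

theorem radialProfile_eq_zero {q : ℝ} (hq : 1 < q) : radialProfile q = 0 :=
  Real.smoothTransition.zero_of_nonpos (by linarith)

theorem deriv_radialProfile_eq_zero {q : ℝ} (hq : 1 < q) : deriv radialProfile q = 0 := by
  have hzero : radialProfile =ᶠ[𝓝 q] fun _ => 0 :=
    eventually_of_mem (lt_mem_nhds hq) fun _ => radialProfile_eq_zero
  rw [hzero.deriv_eq, deriv_const]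

theorem deriv_radialProfile_nonpos (q : ℝ) : deriv radialProfile q ≤ 0 :=
  Antitone.deriv_nonpos fun _ _ h => Real.smoothTransition.monotone (by linarith)

theorem exists_deriv_radialProfile_eq_neg_one : ∃ q, 0 < q ∧ deriv radialProfile q = -1 := by
  obtain ⟨q, hq, hderiv⟩ := exists_deriv_eq_slope radialProfile zero_lt_one
    contDiff_radialProfile.continuous.continuousOn
    (contDiff_radialProfile.differentiable (by simp)).differentiableOn
  exact ⟨q, hq.1, by simp [hderiv, radialProfile]⟩

theorem hasFDerivAt_radialProfile_norm_sq {E : Type*} [NormedAddCommGroup E]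
    [InnerProductSpace ℝ E] (z : E) :
    HasFDerivAt (fun z : E => radialProfile (‖z‖ ^ 2))
      ((2 * deriv radialProfile (‖z‖ ^ 2)) • innerSL ℝ z) z := by
  have hderiv := (contDiff_radialProfile.differentiable (by simp) (‖z‖ ^ 2)).hasDerivAt
  refine (hderiv.comp_hasFDerivAt z (hasStrictFDerivAt_norm_sq z).hasFDerivAt).congr_fderiv ?_
  ext v
  simp only [nsmul_eq_mul, Nat.cast_ofNat, _root_.smul_apply, innerSL_apply_apply, smul_eq_mul]
  ring

end RadialProfile

section RadialMollifiers

open BoundedContinuousFunction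

variable {E : Type*} [NormedAddCommGroup E] [InnerProductSpace ℝ E] [MeasurableSpace E]
  {μ : Measure E}

/-- A smooth kernel of mass one, supported in the unit ball, such that the field `-kernel z • z` is
the gradient of a smooth function, the potential, supported in the unit ball. The rescaled kernels
then satisfy `∂ₜ kernelₜ = t Δ potentialₜ`. -/
structure RadialMollifier (μ : Measure E) where
  kernel : E →ᵇ ℝ
  potential : E →ᵇ ℝ
  contDiff_kernel : ContDiff ℝ (⊤ : ℕ∞) kernel
  contDiff_potential : ContDiff ℝ (⊤ : ℕ∞) potential
  kernel_eq_zero : ∀ z, 1 < ‖z‖ → kernel z = 0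
  potential_eq_zero : ∀ z, 1 < ‖z‖ → potential z = 0
  integral_kernel : ∫ z, kernel z ∂μ = 1
  hasFDerivAt_potential : ∀ z, HasFDerivAt potential (-(kernel z • innerSL ℝ z)) z

theorem RadialMollifier.hasFDerivAt_rescale_potential (m : RadialMollifier μ) (t : ℝ) (x z : E) :
    HasFDerivAt (rescale m.potential t x)
      (-(t⁻¹ • rescale m.kernel t x z • innerSL ℝ (t⁻¹ • (z - x)))) z := by
  have haffine : HasFDerivAt (fun z => t⁻¹ • (z - x)) (t⁻¹ • ContinuousLinearMap.id ℝ E) z :=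
    ((hasFDerivAt_id z).sub_const x).const_smul t⁻¹
  refine (((m.hasFDerivAt_potential _).comp z haffine).const_mul
    (t ^ Module.finrank ℝ E)⁻¹).congr_fderiv ?_
  ext v
  simp only [map_smul, map_sub, ContinuousLinearMap.comp_smulₛₗ, map_inv₀, Real.ringHom_apply,
    ContinuousLinearMap.comp_id, smul_neg, _root_.neg_apply, _root_.smul_apply, _root_.sub_apply,
    coe_innerSL_apply, smul_eq_mul, rescale_apply, neg_inj]
  ring

variable [FiniteDimensional ℝ E] [BorelSpace E] [μ.IsAddHaarMeasure]

theorem integral_neg_deriv_radialProfile_pos [Nontrivial E] :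
    0 < ∫ z : E, -(2 * deriv radialProfile (‖z‖ ^ 2)) ∂μ := by
  obtain ⟨q, hq, hderiv⟩ := exists_deriv_radialProfile_eq_neg_one
  obtain ⟨z, hz⟩ := exists_norm_eq E (Real.sqrt_nonneg q)
  have hcont : Continuous fun z : E => -(2 * deriv radialProfile (‖z‖ ^ 2)) :=
    (continuous_const.mul (contDiff_deriv_radialProfile.continuous.comp (by fun_prop))).neg
  refine hcont.integral_pos_of_hasCompactSupport_nonneg_nonzero
    (hasCompactSupport_of_forall_one_lt_norm fun z hz => ?_) (fun z => ?_) (x := z) ?_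
  · rw [deriv_radialProfile_eq_zero (one_lt_pow₀ hz two_ne_zero), mul_zero, neg_zero]
  · simpa only [Pi.zero_apply, neg_nonneg] using
      mul_nonpos_of_nonneg_of_nonpos zero_le_two (deriv_radialProfile_nonpos (‖z‖ ^ 2))
  · simp [hz, Real.sq_sqrt hq.le, hderiv]

theorem exists_radialMollifier [Nontrivial E] (μ : Measure E) [μ.IsAddHaarMeasure] :
    Nonempty (RadialMollifier μ) := by
  let c := ∫ z : E, -(2 * deriv radialProfile (‖z‖ ^ 2)) ∂μ
  let ρ : E → ℝ := fun z => c⁻¹ • -(2 * deriv radialProfile (‖z‖ ^ 2))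
  let ψ : E → ℝ := fun z => c⁻¹ • radialProfile (‖z‖ ^ 2)
  have hnorm : ∀ z : E, 1 < ‖z‖ → 1 < ‖z‖ ^ 2 := fun z hz => one_lt_pow₀ hz two_ne_zero
  have hρ0 : ∀ z, 1 < ‖z‖ → ρ z = 0 := fun z hz => by
    simp [ρ, deriv_radialProfile_eq_zero (hnorm z hz)]
  have hψ0 : ∀ z, 1 < ‖z‖ → ψ z = 0 := fun z hz => by
    simp [ψ, radialProfile_eq_zero (hnorm z hz)]
  have hρ : ContDiff ℝ (⊤ : ℕ∞) ρ :=
    ((contDiff_const.mul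
      (contDiff_deriv_radialProfile.comp (contDiff_norm_sq ℝ))).neg).const_smul c⁻¹
  have hψ : ContDiff ℝ (⊤ : ℕ∞) ψ :=
    (contDiff_radialProfile.comp (contDiff_norm_sq ℝ)).const_smul c⁻¹
  obtain ⟨F, hF⟩ := exists_coe_eq_of_forall_one_lt_norm hρ.continuous hρ0
  obtain ⟨Ψ, hΨ⟩ := exists_coe_eq_of_forall_one_lt_norm hψ.continuous hψ0
  refine ⟨⟨F, Ψ, hF ▸ hρ, hΨ ▸ hψ, hF ▸ hρ0, hΨ ▸ hψ0, ?_, fun z => ?_⟩⟩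
  · simp only [hF, ρ, integral_smul]
    exact inv_mul_cancel₀ integral_neg_deriv_radialProfile_pos.ne'
  · rw [hF, hΨ]
    refine ((hasFDerivAt_radialProfile_norm_sq z).const_smul c⁻¹).congr_fderiv ?_
    rw [smul_assoc, ← smul_neg, neg_smul, neg_neg]

end RadialMollifiers

local notation "𝔼" => EuclideanSpace ℝ (Fin n)

section TestFunctions

variable {Ω : Set (EuclideanSpace ℝ (Fin n))} {φ ψ : EuclideanSpace ℝ (Fin n) → ℝ}

theorem IsTestFun.add (hφ : IsTestFun Ω φ) (hψ : IsTestFun Ω ψ) : IsTestFun Ω (φ + ψ) :=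
  ⟨hφ.1.add hψ.1, hφ.2.1.add hψ.2.1,
    (tsupport_add φ ψ).trans (union_subset hφ.2.2 hψ.2.2)⟩

theorem IsTestFun.mul_left (hφ : IsTestFun Ω φ) (hψ : ContDiff ℝ (⊤ : ℕ∞) ψ) :
    IsTestFun Ω (ψ * φ) :=
  ⟨hψ.mul hφ.1, hφ.2.1.mul_left, tsupport_mul_subset_right.trans hφ.2.2⟩

theorem IsTestFun.zero : IsTestFun Ω (0 : 𝔼 → ℝ) :=
  ⟨contDiff_const, HasCompactSupport.zero, by simp⟩

theorem IsTestFun.differentiable (hφ : IsTestFun Ω φ) : Differentiable ℝ φ :=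
  hφ.1.differentiable (by simp)

theorem IsTestFun.eq_zero_of_notMem (hφ : IsTestFun Ω φ) {x : 𝔼} (hx : x ∉ Ω) : φ x = 0 :=
  image_eq_zero_of_notMem_tsupport fun h => hx (hφ.2.2 h)

theorem IsTestFun.memLp (hφ : IsTestFun Ω φ) (p : ℝ≥0∞) (s : Set 𝔼) :
    MemLp φ p (volume.restrict s) :=
  (hφ.1.continuous.memLp_of_hasCompactSupport hφ.2.1).restrict s

theorem IsTestFun.continuous_gradient (hφ : IsTestFun Ω φ) : Continuous (gradient φ) :=
  (InnerProductSpace.toDual ℝ 𝔼).symm.continuous.comp (hφ.1.continuous_fderiv (by simp))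

theorem IsTestFun.hasCompactSupport_gradient (hφ : IsTestFun Ω φ) :
    HasCompactSupport (gradient φ) :=
  (hφ.2.1.fderiv ℝ).comp_left (map_zero (InnerProductSpace.toDual ℝ 𝔼).symm)

theorem IsTestFun.memLp_gradient (hφ : IsTestFun Ω φ) (p : ℝ≥0∞) (s : Set 𝔼) :
    MemLp (gradient φ) p (volume.restrict s) :=
  (hφ.continuous_gradient.memLp_of_hasCompactSupport hφ.hasCompactSupport_gradient).restrict s

theorem IsTestFun.memW120 (hφ : IsTestFun Ω φ) : MemW120 Ω φ :=
  ⟨⟨hφ.memLp 2 Ω, hφ.memLp_gradient 2 Ω⟩, fun _ => φ, fun _ => hφ, by simp⟩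

theorem gradient_eq_zero_of_notMem_tsupport {x : 𝔼} (hx : x ∉ tsupport φ) :
    gradient φ x = 0 := by
  rw [gradient, Function.notMem_support.1 fun h => hx (support_fderiv_subset ℝ h), map_zero]

theorem norm_gradient (φ : 𝔼 → ℝ) (x : 𝔼) : ‖gradient φ x‖ = ‖fderiv ℝ φ x‖ :=
  (InnerProductSpace.toDual ℝ 𝔼).symm.norm_map _

/-- The vector space `C_c^∞(Ω)`. -/
def testSubmodule (Ω : Set 𝔼) : Submodule ℝ (𝔼 → ℝ) where
  carrier := {φ | IsTestFun Ω φ}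
  add_mem' := IsTestFun.add
  zero_mem' := IsTestFun.zero
  smul_mem' c _ h := h.mul_left (ψ := fun _ => c) contDiff_const

/-- The inclusion of `C_c^∞(Ω)` into `L²(Ω)`. -/
def testToLp (Ω : Set 𝔼) : testSubmodule Ω →ₗ[ℝ] Lp ℝ 2 (volume.restrict Ω) where
  toFun φ := (IsTestFun.memLp φ.2 2 Ω).toLp φ.1
  map_add' _ _ := MemLp.toLp_add _ _
  map_smul' c _ := MemLp.toLp_const_smul c _

/-- The gradient as a linear map from `C_c^∞(Ω)` to `L²(Ω; ℝⁿ)`. -/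
def gradToLp (Ω : Set 𝔼) : testSubmodule Ω →ₗ[ℝ] Lp 𝔼 2 (volume.restrict Ω) where
  toFun φ := (IsTestFun.memLp_gradient φ.2 2 Ω).toLp (gradient φ.1)
  map_add' φ ψ := by
    rw [← MemLp.toLp_add]
    refine MemLp.toLp_congr _ _ (ae_of_all _ fun x => ?_)
    simp [gradient, fderiv_add (IsTestFun.differentiable φ.2 x) (IsTestFun.differentiable ψ.2 x)]
  map_smul' c φ := by
    rw [RingHom.id_apply, ← MemLp.toLp_const_smul]
    refine MemLp.toLp_congr _ _ (ae_of_all _ fun x => ?_)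
    simp [gradient, fderiv_const_smul (IsTestFun.differentiable φ.2 x)]

theorem testToLp_mk (hφ : IsTestFun Ω φ) : testToLp Ω ⟨φ, hφ⟩ = (hφ.memLp 2 Ω).toLp φ := rfl

theorem gradToLp_mk (hφ : IsTestFun Ω φ) :
    gradToLp Ω ⟨φ, hφ⟩ = (hφ.memLp_gradient 2 Ω).toLp (gradient φ) := rfl

theorem real_inner_toLp {α F : Type*} [MeasurableSpace α] [NormedAddCommGroup F]
    [InnerProductSpace ℝ F] {μ : Measure α} {f g : α → F} (hf : MemLp f 2 μ) (hg : MemLp g 2 μ) :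
    ⟪hf.toLp f, hg.toLp g⟫ = ∫ x, ⟪f x, g x⟫ ∂μ := by
  rw [L2.inner_def]
  refine integral_congr_ae ?_
  filter_upwards [hf.coeFn_toLp, hg.coeFn_toLp] with x h1 h2
  rw [h1, h2]

theorem norm_toLp_eq_sqrt {α F : Type*} [MeasurableSpace α] [NormedAddCommGroup F]
    [InnerProductSpace ℝ F] {μ : Measure α} {f : α → F} (hf : MemLp f 2 μ) :
    ‖hf.toLp f‖ = √(∫ x, ‖f x‖ ^ 2 ∂μ) := by
  simp only [norm_eq_sqrt_real_inner, real_inner_toLp, Real.sq_sqrt real_inner_self_nonneg]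

theorem exists_norm_testToLp_le [Nonempty (Fin n)] (hΩ : volume Ω ≠ ∞) :
    ∃ C, ∀ φ : testSubmodule Ω, ‖testToLp Ω φ‖ ≤ C * ‖gradToLp Ω φ‖ := by
  obtain ⟨C, hC⟩ := exists_poincare_const (volume : Measure 𝔼) hΩ
  refine ⟨C, fun ⟨φ, (hφ : IsTestFun Ω φ)⟩ => ?_⟩
  have hpoinc := hC φ (hφ.1.of_le (by simp)) hφ.2.1 ((subset_tsupport φ).trans hφ.2.2)
  rw [testToLp_mk, gradToLp_mk, norm_toLp_eq_sqrt, norm_toLp_eq_sqrt,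
    setIntegral_eq_integral_of_forall_compl_eq_zero fun x hx => by
      simp [hφ.eq_zero_of_notMem hx],
    setIntegral_eq_integral_of_forall_compl_eq_zero fun x hx => by
      simp [gradient_eq_zero_of_notMem_tsupport fun h => hx (hφ.2.2 h)]]
  simpa only [norm_gradient] using hpoinc

end TestFunctions

section MollifiedSolutions

open BoundedContinuousFunction

variable {Ω : Set (EuclideanSpace ℝ (Fin n))}

theorem RadialMollifier.isTestFun_rescale_potential (m : RadialMollifier (volume : Measure 𝔼))
    {x : 𝔼} {t : ℝ} (ht : 0 < t) (hx : closedBall x t ⊆ Ω) :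
    IsTestFun Ω (rescale m.potential t x) :=
  ⟨contDiff_rescale m.contDiff_potential t x, hasCompactSupport_rescale m.potential_eq_zero ht x,
    (tsupport_rescale_subset m.potential_eq_zero ht x).trans hx⟩

variable [IsFiniteMeasure (volume.restrict Ω)]

/-- The class of the rescaled kernel in `L²(Ω)`. -/
def rescaleLp (Ω : Set 𝔼) [IsFiniteMeasure (volume.restrict Ω)] (ρ : 𝔼 →ᵇ ℝ) (t : ℝ) (x : 𝔼) :
    Lp ℝ 2 (volume.restrict Ω) :=
  BoundedContinuousFunction.toLp 2 (volume.restrict Ω) ℝ (rescale ρ t x)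

theorem coeFn_rescaleLp (ρ : 𝔼 →ᵇ ℝ) (t : ℝ) (x : 𝔼) :
    rescaleLp Ω ρ t x =ᵐ[volume.restrict Ω] rescale ρ t x :=
  BoundedContinuousFunction.coeFn_toLp _ _ ℝ _

theorem inner_rescaleLp (u : Lp ℝ 2 (volume.restrict Ω)) (ρ : 𝔼 →ᵇ ℝ) (t : ℝ) (x : 𝔼) :
    ⟪u, rescaleLp Ω ρ t x⟫ = ∫ z in Ω, rescale ρ t x z * u z := by
  rw [L2.inner_def]
  refine integral_congr_ae ?_
  filter_upwards [coeFn_rescaleLp (Ω := Ω) ρ t x] with z hz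
  rw [hz, RCLike.inner_apply, conj_trivial]

theorem contDiffAt_rescaleLp {ρ : 𝔼 →ᵇ ℝ} (hρ : ∀ z, 1 < ‖z‖ → ρ z = 0)
    (hsmooth : ContDiff ℝ (⊤ : ℕ∞) ρ) {t : ℝ} (ht : 0 < t) (x : 𝔼) :
    ContDiffAt ℝ (⊤ : ℕ∞) (fun p : ℝ × 𝔼 => rescaleLp Ω ρ p.1 p.2) (t, x) :=
  (contDiffAt_rescale hρ hsmooth ht x).continuousLinearMap_comp
    (BoundedContinuousFunction.toLp 2 (volume.restrict Ω) ℝ : (𝔼 →ᵇ ℝ) →L[ℝ] _)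

namespace RadialMollifier

variable (m : RadialMollifier (volume : Measure (EuclideanSpace ℝ (Fin n))))
  {x : EuclideanSpace ℝ (Fin n)} {t : ℝ}

theorem testToLp_rescale_potential (ht : 0 < t) (hx : closedBall x t ⊆ Ω) :
    testToLp Ω ⟨rescale m.potential t x, m.isTestFun_rescale_potential ht hx⟩ =
      rescaleLp Ω m.potential t x :=
  Lp.ext (((m.isTestFun_rescale_potential ht hx).memLp 2 Ω).coeFn_toLp.trans
    (coeFn_rescaleLp _ _ _).symm)

theorem hasDerivAt_inner_testToLp_rescaleLp {v : 𝔼 → ℝ} (hv : IsTestFun Ω v) (ht : 0 < t)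
    (hx : closedBall x t ⊆ Ω) :
    HasDerivAt (fun t => ⟪testToLp Ω ⟨v, hv⟩, rescaleLp Ω m.kernel t x⟫)
      (-(t * ⟪gradToLp Ω ⟨v, hv⟩,
        gradToLp Ω ⟨rescale m.potential t x, m.isTestFun_rescale_potential ht hx⟩⟫)) t := by
  have hderiv := hasDerivAt_integral_rescale_mul (μ := volume)
    (hasCompactSupport_of_forall_one_lt_norm m.kernel_eq_zero) (hv.1.of_le (by simp)) hv.2.1 ht x
  have hinner : ∀ t, ⟪testToLp Ω ⟨v, hv⟩, rescaleLp Ω m.kernel t x⟫ =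
      ∫ z, rescale m.kernel t x z * v z := fun t => by
    rw [inner_rescaleLp, testToLp_mk,
      ← setIntegral_eq_integral_of_forall_compl_eq_zero (s := Ω)
        (f := fun z => rescale m.kernel t x z * v z) fun z hz => by
          rw [hv.eq_zero_of_notMem hz, mul_zero]]
    refine integral_congr_ae ?_
    filter_upwards [(hv.memLp 2 Ω).coeFn_toLp] with z hz
    rw [hz]
  have hpointwise : ∀ z, rescale m.kernel t x z * fderiv ℝ v z (t⁻¹ • (z - x)) =
      -(t * ⟪gradient v z, gradient (rescale m.potential t x) z⟫) := fun z => by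
    rw [real_inner_comm _ (gradient v z), inner_gradient_left,
      (m.hasFDerivAt_rescale_potential t x z).fderiv]
    simp only [_root_.neg_apply, _root_.smul_apply, innerSL_apply_apply,
      smul_eq_mul]
    rw [real_inner_comm (gradient v z), inner_gradient_left]
    field_simp
  simp only [hinner]
  convert hderiv using 1
  rw [gradToLp_mk, gradToLp_mk, real_inner_toLp, ← integral_const_mul, ← integral_neg]
  simp only [hpointwise]
  exact setIntegral_eq_integral_of_forall_compl_eq_zero fun z hz => by
    simp [gradient_eq_zero_of_notMem_tsupport fun h => hz (hv.2.2 h)]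

theorem hasDerivAt_inner_rescaleLp {f u : Lp ℝ 2 (volume.restrict Ω)}
    {w : Lp 𝔼 2 (volume.restrict Ω)} (h : IsVariationalSol (testToLp Ω) (gradToLp Ω) f u w)
    (ht : 0 < t) (hx : closedBall x t ⊆ Ω) :
    HasDerivAt (fun t => ⟪u, rescaleLp Ω m.kernel t x⟫)
      (-(t * ⟪f, rescaleLp Ω m.potential t x⟫)) t := by
  obtain ⟨D, hD⟩ : ∃ D, HasDerivAt (fun t => rescaleLp Ω m.kernel t x) D t :=
    ⟨_, (((contDiffAt_rescaleLp m.kernel_eq_zero m.contDiff_kernel ht x).comp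
      (f := fun t : ℝ => (t, x)) t (contDiffAt_id.prodMk contDiffAt_const)).differentiableAt
        (by simp)).hasDerivAt⟩
  have hinner : ∀ u, HasDerivAt (fun t => ⟪u, rescaleLp Ω m.kernel t x⟫) ⟪u, D⟫ t := fun u =>
    (innerSL ℝ u).hasFDerivAt.comp_hasDerivAt t hD
  let ψ : testSubmodule Ω := ⟨rescale m.potential t x, m.isTestFun_rescale_potential ht hx⟩
  have hclosure : ⟪u, D⟫ = -(t * ⟪w, gradToLp Ω ψ⟫) :=
    sobolevClosure_induction (P := fun p => ⟪p.1, D⟫ = -(t * ⟪p.2, gradToLp Ω ψ⟫))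
      (isClosed_eq (by fun_prop) (by fun_prop))
      (fun v => (hinner _).unique (m.hasDerivAt_inner_testToLp_rescaleLp v.2 ht hx)) h.mem
  rw [← m.testToLp_rescale_potential ht hx, ← h.weak, ← hclosure]
  exact hinner u

theorem abs_inner_rescaleLp_sub_le {f u : Lp ℝ 2 (volume.restrict Ω)}
    {w : Lp 𝔼 2 (volume.restrict Ω)} (h : IsVariationalSol (testToLp Ω) (gradToLp Ω) f u w)
    {s r C : ℝ} (hs : 0 < s) (hsr : s ≤ r) (hx : closedBall x r ⊆ Ω)
    (hC : ∀ t ∈ Icc s r, |⟪f, rescaleLp Ω m.potential t x⟫| ≤ C) :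
    |⟪u, rescaleLp Ω m.kernel r x⟫ - ⟪u, rescaleLp Ω m.kernel s x⟫| ≤ r * C * (r - s) := by
  have hmvt := (convex_Icc s r).norm_image_sub_le_of_norm_hasDerivWithin_le (C := r * C)
    (fun t ht => (m.hasDerivAt_inner_rescaleLp h (hs.trans_le ht.1)
      ((closedBall_subset_closedBall ht.2).trans hx)).hasDerivWithinAt)
    (fun t ht => ?_) (left_mem_Icc.2 hsr) (right_mem_Icc.2 hsr)
  · rwa [Real.norm_eq_abs, Real.norm_of_nonneg (sub_nonneg.2 hsr)] at hmvt
  · rw [norm_neg, norm_mul, Real.norm_of_nonneg (hs.trans_le ht.1).le]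
    exact mul_le_mul ht.2 (hC t ht) (abs_nonneg _) (hs.le.trans hsr)

theorem ae_tendsto_inner_rescaleLp (hΩ : MeasurableSet Ω) (u : Lp ℝ 2 (volume.restrict Ω)) :
    ∀ᵐ x ∂(volume.restrict Ω),
      Tendsto (fun t => ⟪u, rescaleLp Ω m.kernel t x⟫) (𝓝[>] 0) (𝓝 (u x)) := by
  have hu : Integrable (Ω.indicator u) volume :=
    (integrable_indicator_iff hΩ).2 ((Lp.memLp u).integrable one_le_two)
  rw [ae_restrict_iff' hΩ]
  filter_upwards [ae_tendsto_integral_rescale_smul m.kernel_eq_zero m.integral_kernel hu]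
    with x hlim hx
  rw [indicator_of_mem hx] at hlim
  refine hlim.congr fun t => ?_
  rw [inner_rescaleLp, ← integral_indicator hΩ]
  simp only [smul_eq_mul, indicator_mul_right]

end RadialMollifier

end MollifiedSolutions

section GreenFunction

open BoundedContinuousFunction

theorem exists_inner_eq_integral_abs {α : Type*} [MeasurableSpace α] {μ : Measure α}
    [IsFiniteMeasure μ] (d : Lp ℝ 2 μ) :
    ∃ σ : Lp ℝ 2 μ, (∀ᵐ z ∂μ, |σ z| ≤ 1) ∧ ⟪d, σ⟫ = ∫ z, |d z| ∂μ := by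
  let σ : α → ℝ := fun z => if 0 ≤ d z then 1 else -1
  have hσ_le : ∀ z, |σ z| ≤ 1 := fun z => by dsimp only [σ]; split_ifs <;> simp
  have hσ : MemLp σ 2 μ :=
    .of_bound ((Measurable.ite (measurableSet_le measurable_const
      (Lp.stronglyMeasurable d).measurable) measurable_const
        measurable_const).aestronglyMeasurable) 1 (ae_of_all _ hσ_le)
  refine ⟨hσ.toLp σ, ?_, ?_⟩
  · filter_upwards [hσ.coeFn_toLp] with z hz
    rw [hz]
    exact hσ_le z
  · rw [L2.inner_def]
    refine integral_congr_ae ?_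
    filter_upwards [hσ.coeFn_toLp] with z hz
    rw [hz, RCLike.inner_apply, conj_trivial]
    dsimp only [σ]
    split_ifs with hd
    · rw [abs_of_nonneg hd, one_mul]
    · rw [abs_of_neg (not_le.1 hd), neg_one_mul]

theorem integrable_of_tendsto_of_integral_abs_le {α : Type*} [MeasurableSpace α] {μ : Measure α}
    {f : ℕ → α → ℝ} {g : α → ℝ} {C : ℝ} (hf : ∀ k, Integrable (f k) μ)
    (hlim : ∀ᵐ z ∂μ, Tendsto (fun k => f k z) atTop (𝓝 (g z))) (hC : ∀ k, ∫ z, |f k z| ∂μ ≤ C) :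
    Integrable g μ ∧ ∫ z, |g z| ∂μ ≤ C := by
  have hbound : ∀ k, ∫⁻ z, ‖f k z‖ₑ ∂μ ≤ ENNReal.ofReal C := fun k => by
    rw [← ofReal_integral_norm_eq_lintegral_enorm (hf k)]
    exact ENNReal.ofReal_le_ofReal (hC k)
  have hfatou : ∫⁻ z, ‖g z‖ₑ ∂μ ≤ ENNReal.ofReal C := calc
    ∫⁻ z, ‖g z‖ₑ ∂μ = ∫⁻ z, liminf (fun k => ‖f k z‖ₑ) atTop ∂μ :=
      lintegral_congr_ae (hlim.mono fun z hz => hz.enorm.liminf_eq.symm)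
    _ ≤ liminf (fun k => ∫⁻ z, ‖f k z‖ₑ ∂μ) atTop :=
      lintegral_liminf_le' fun k => (hf k).1.enorm
    _ ≤ ENNReal.ofReal C := liminf_le_of_frequently_le' (Frequently.of_forall hbound)
  have hg : Integrable g μ :=
    ⟨aestronglyMeasurable_of_tendsto_ae atTop (fun k => (hf k).1) hlim,
      hfatou.trans_lt ENNReal.ofReal_lt_top⟩
  have hC0 : 0 ≤ C := (integral_nonneg fun _ => abs_nonneg _).trans (hC 0)
  refine ⟨hg, ?_⟩
  rwa [← ofReal_integral_norm_eq_lintegral_enorm hg, ENNReal.ofReal_le_ofReal_iff hC0] at hfatou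

variable {Ω : Set (EuclideanSpace ℝ (Fin n))}

/-- `S` sends `f ∈ L²(Ω)` to the weak solution `u ∈ W₀^{1,2}(Ω)` of `-Δu = f`. -/
def IsDirichletSolutionOperator
    (S : Lp ℝ 2 (volume.restrict Ω) →L[ℝ] Lp ℝ 2 (volume.restrict Ω)) : Prop :=
  ∀ f, ∃ w, IsVariationalSol (testToLp Ω) (gradToLp Ω) f (S f) w

theorem IsDirichletSolutionOperator.inner_comm
    {S : Lp ℝ 2 (volume.restrict Ω) →L[ℝ] Lp ℝ 2 (volume.restrict Ω)}
    (hS : IsDirichletSolutionOperator S) (f g : Lp ℝ 2 (volume.restrict Ω)) :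
    ⟪S f, g⟫ = ⟪f, S g⟫ := by
  obtain ⟨_, hf⟩ := hS f
  obtain ⟨_, hg⟩ := hS g
  exact hf.inner_comm hg

/-- The closed balls of radii `s` and `t` about `x` and `y` lie in `Ω` and are disjoint. -/
structure AreAdmissibleRadii (Ω : Set 𝔼) (x y : 𝔼) (s t : ℝ) : Prop where
  left_pos : 0 < s
  right_pos : 0 < t
  left_subset : closedBall x s ⊆ Ω
  right_subset : closedBall y t ⊆ Ω
  add_lt_dist : s + t < dist x y

namespace AreAdmissibleRadii

variable {x y : EuclideanSpace ℝ (Fin n)} {s t s' t' : ℝ}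

theorem symm (h : AreAdmissibleRadii Ω x y s t) : AreAdmissibleRadii Ω y x t s :=
  ⟨h.right_pos, h.left_pos, h.right_subset, h.left_subset, by
    simpa only [add_comm, dist_comm] using h.add_lt_dist⟩

theorem mono (h : AreAdmissibleRadii Ω x y s t) (hs : 0 < s') (ht : 0 < t') (hss : s' ≤ s)
    (htt : t' ≤ t) : AreAdmissibleRadii Ω x y s' t' :=
  ⟨hs, ht, (closedBall_subset_closedBall hss).trans h.left_subset,
    (closedBall_subset_closedBall htt).trans h.right_subset,
    (add_le_add hss htt).trans_lt h.add_lt_dist⟩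

end AreAdmissibleRadii

theorem exists_areAdmissibleRadii_nhds (hΩ : IsOpen Ω) {x y : 𝔼} (hx : x ∈ Ω) (hy : y ∈ Ω)
    (hxy : x ≠ y) :
    ∃ r > 0, ∀ᶠ p : 𝔼 × 𝔼 in 𝓝 (x, y), AreAdmissibleRadii Ω p.1 p.2 r r := by
  obtain ⟨a, ha, hax⟩ := nhds_basis_closedBall.mem_iff.1 (hΩ.mem_nhds hx)
  obtain ⟨b, hb, hby⟩ := nhds_basis_closedBall.mem_iff.1 (hΩ.mem_nhds hy)
  obtain ⟨r, hr, hrmin⟩ := exists_between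
    (lt_min (lt_min (half_pos ha) (half_pos hb)) (div_pos (dist_pos.2 hxy) three_pos))
  obtain ⟨⟨hra, hrb⟩, hrd⟩ : (r < a / 2 ∧ r < b / 2) ∧ r < dist x y / 3 := by
    simpa only [lt_min_iff] using hrmin
  have hdist : ∀ᶠ p : 𝔼 × 𝔼 in 𝓝 (x, y), r + r < dist p.1 p.2 :=
    continuous_dist.continuousAt.eventually_const_lt (by dsimp only; linarith [dist_pos.2 hxy])
  refine ⟨r, hr, ?_⟩
  filter_upwards [prod_mem_nhds (ball_mem_nhds x hr) (ball_mem_nhds y hr), hdist] with p hp hpd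
  have hpx : dist p.1 x < r := hp.1
  have hpy : dist p.2 y < r := hp.2
  exact ⟨hr, hr, (closedBall_subset_closedBall' (by linarith)).trans hax,
    (closedBall_subset_closedBall' (by linarith)).trans hby, hpd⟩

variable [IsFiniteMeasure (volume.restrict Ω)]

theorem inner_rescaleLp_rescaleLp_eq_zero {ρ ψ : 𝔼 →ᵇ ℝ} (hρ : ∀ z, 1 < ‖z‖ → ρ z = 0)
    (hψ : ∀ z, 1 < ‖z‖ → ψ z = 0) {x y : 𝔼} {s t : ℝ} (hs : 0 < s) (ht : 0 < t)
    (hst : s + t < dist x y) : ⟪rescaleLp Ω ρ s x, rescaleLp Ω ψ t y⟫ = 0 := by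
  rw [inner_rescaleLp]
  refine integral_eq_zero_of_ae ?_
  filter_upwards [coeFn_rescaleLp (Ω := Ω) ρ s x] with z hz
  rw [hz]
  by_cases hzx : z ∈ closedBall x s
  · have hzy : z ∉ closedBall y t := fun hzy =>
      (closedBall_disjoint_closedBall hst).notMem_of_mem_left hzx hzy
    simp [rescale_eq_zero hψ ht hzy]
  · simp [rescale_eq_zero hρ hs hzx]

theorem abs_inner_rescaleLp_le {f : Lp ℝ 2 (volume.restrict Ω)}
    (hf : ∀ᵐ z ∂(volume.restrict Ω), |f z| ≤ 1) {ρ : 𝔼 →ᵇ ℝ} (hρ : ∀ z, 1 < ‖z‖ → ρ z = 0)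
    {t : ℝ} (ht : 0 < t) (x : 𝔼) : |⟪f, rescaleLp Ω ρ t x⟫| ≤ ∫ z, |ρ z| := by
  have hint : Integrable (fun z => |rescale ρ t x z|) volume :=
    ((rescale ρ t x).continuous.integrable_of_hasCompactSupport
      (hasCompactSupport_rescale hρ ht x)).abs
  calc |⟪f, rescaleLp Ω ρ t x⟫| = |∫ z in Ω, rescale ρ t x z * f z| := by rw [inner_rescaleLp]
    _ ≤ ∫ z in Ω, |rescale ρ t x z| := by
      rw [← Real.norm_eq_abs]
      refine norm_integral_le_of_norm_le hint.restrict ?_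
      filter_upwards [hf] with z hz
      rw [Real.norm_eq_abs, abs_mul]
      exact mul_le_of_le_one_right (abs_nonneg _) hz
    _ ≤ ∫ z, |rescale ρ t x z| := setIntegral_le_integral hint (ae_of_all _ fun z => abs_nonneg _)
    _ = ∫ z, |ρ z| := integral_abs_rescale ρ ht x

/-- The kernel of `S`, obtained by testing `S` against mollified point masses at `x` and `y`. If
`S` solves the Dirichlet problem and `x ≠ y` are in `Ω`, the pairing does not depend on `t` once `t`
is small; for `x = y` the limit need not exist, and the value is then arbitrary. -/
def greenFunction (m : RadialMollifier (volume : Measure 𝔼))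
    (S : Lp ℝ 2 (volume.restrict Ω) →L[ℝ] Lp ℝ 2 (volume.restrict Ω)) (x y : 𝔼) : ℝ :=
  limUnder (𝓝[>] 0) fun t => ⟪S (rescaleLp Ω m.kernel t x), rescaleLp Ω m.kernel t y⟫

namespace IsDirichletSolutionOperator

variable (m : RadialMollifier (volume : Measure (EuclideanSpace ℝ (Fin n))))
  {S : Lp ℝ 2 (volume.restrict Ω) →L[ℝ] Lp ℝ 2 (volume.restrict Ω)}
  {x y : EuclideanSpace ℝ (Fin n)} {s t r s' t' : ℝ}

theorem inner_rescaleLp_swap (hS : IsDirichletSolutionOperator S) :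
    ⟪S (rescaleLp Ω m.kernel s x), rescaleLp Ω m.kernel t y⟫ =
      ⟪S (rescaleLp Ω m.kernel t y), rescaleLp Ω m.kernel s x⟫ := by
  rw [hS.inner_comm, real_inner_comm]

theorem inner_rescaleLp_eq_of_right_le (hS : IsDirichletSolutionOperator S)
    (h : AreAdmissibleRadii Ω x y s t) (ht : 0 < t') (htt : t' ≤ t) :
    ⟪S (rescaleLp Ω m.kernel s x), rescaleLp Ω m.kernel t y⟫ =
      ⟪S (rescaleLp Ω m.kernel s x), rescaleLp Ω m.kernel t' y⟫ := by
  obtain ⟨w, hw⟩ := hS (rescaleLp Ω m.kernel s x)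
  have hle := m.abs_inner_rescaleLp_sub_le hw (C := 0) ht htt h.right_subset fun τ hτ => by
    rw [inner_rescaleLp_rescaleLp_eq_zero m.kernel_eq_zero m.potential_eq_zero h.left_pos
      (ht.trans_le hτ.1) ((add_le_add_right hτ.2 s).trans_lt h.add_lt_dist), abs_zero]
  rw [mul_zero, zero_mul] at hle
  exact sub_eq_zero.1 (abs_nonpos_iff.1 hle)

theorem inner_rescaleLp_eq_of_le (hS : IsDirichletSolutionOperator S)
    (h : AreAdmissibleRadii Ω x y s t) (hs : 0 < s') (ht : 0 < t') (hss : s' ≤ s) (htt : t' ≤ t) :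
    ⟪S (rescaleLp Ω m.kernel s x), rescaleLp Ω m.kernel t y⟫ =
      ⟪S (rescaleLp Ω m.kernel s' x), rescaleLp Ω m.kernel t' y⟫ := by
  rw [hS.inner_rescaleLp_eq_of_right_le m h ht htt, hS.inner_rescaleLp_swap,
    hS.inner_rescaleLp_eq_of_right_le m (h.mono h.left_pos ht le_rfl htt).symm hs hss,
    hS.inner_rescaleLp_swap]

theorem greenFunction_eq (hS : IsDirichletSolutionOperator S) (h : AreAdmissibleRadii Ω x y s t) :
    greenFunction m S x y = ⟪S (rescaleLp Ω m.kernel s x), rescaleLp Ω m.kernel t y⟫ := by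
  refine Tendsto.limUnder_eq (tendsto_const_nhds.congr' ?_)
  filter_upwards [Ioo_mem_nhdsGT (lt_min h.left_pos h.right_pos)] with τ hτ
  exact hS.inner_rescaleLp_eq_of_le m h hτ.1 hτ.1 (hτ.2.le.trans (min_le_left _ _))
    (hτ.2.le.trans (min_le_right _ _))

theorem greenFunction_comm (hS : IsDirichletSolutionOperator S) (hΩ : IsOpen Ω) (hx : x ∈ Ω)
    (hy : y ∈ Ω) (hxy : x ≠ y) : greenFunction m S x y = greenFunction m S y x := by
  obtain ⟨r, -, hr⟩ := exists_areAdmissibleRadii_nhds hΩ hx hy hxy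
  have h := hr.self_of_nhds
  rw [hS.greenFunction_eq m h, hS.greenFunction_eq m h.symm, hS.inner_rescaleLp_swap]

theorem contDiffAt_greenFunction (hS : IsDirichletSolutionOperator S) (hΩ : IsOpen Ω) (hx : x ∈ Ω)
    (hy : y ∈ Ω) (hxy : x ≠ y) :
    ContDiffAt ℝ (⊤ : ℕ∞) (fun p : 𝔼 × 𝔼 => greenFunction m S p.1 p.2) (x, y) := by
  obtain ⟨r, hr, h⟩ := exists_areAdmissibleRadii_nhds hΩ hx hy hxy
  have hkernel : ∀ z, ContDiffAt ℝ (⊤ : ℕ∞) (rescaleLp Ω m.kernel r) z := fun z =>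
    (contDiffAt_rescaleLp m.kernel_eq_zero m.contDiff_kernel hr z).comp (f := fun z => (r, z)) z
      (contDiffAt_const.prodMk contDiffAt_id)
  have hinner : ContDiffAt ℝ (⊤ : ℕ∞) (fun p : 𝔼 × 𝔼 =>
      ⟪S (rescaleLp Ω m.kernel r p.1), rescaleLp Ω m.kernel r p.2⟫) (x, y) :=
    (((hkernel x).comp (x, y) contDiffAt_fst).continuousLinearMap_comp S).inner ℝ
      ((hkernel y).comp (x, y) contDiffAt_snd)
  exact hinner.congr_of_eventuallyEq (h.mono fun p hp => hS.greenFunction_eq m hp)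

theorem ae_eq_greenFunction (hS : IsDirichletSolutionOperator S) (hΩ : IsOpen Ω) (hs : 0 < s)
    (hx : closedBall x s ⊆ Ω) :
    ∀ᵐ y ∂(volume.restrict Ω), s < dist x y →
      S (rescaleLp Ω m.kernel s x) y = greenFunction m S x y := by
  filter_upwards [m.ae_tendsto_inner_rescaleLp hΩ.measurableSet (S (rescaleLp Ω m.kernel s x)),
    ae_restrict_mem hΩ.measurableSet] with y hlim hy hdist
  refine tendsto_nhds_unique hlim (tendsto_const_nhds.congr' ?_)
  obtain ⟨b, hb, hby⟩ := nhds_basis_closedBall.mem_iff.1 (hΩ.mem_nhds hy)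
  filter_upwards [Ioo_mem_nhdsGT (lt_min hb (sub_pos.2 hdist))] with t ht
  obtain ⟨htb, htd⟩ := lt_min_iff.1 ht.2
  exact hS.greenFunction_eq m ⟨hs, ht.1, hx, (closedBall_subset_closedBall htb.le).trans hby,
    lt_sub_iff_add_lt'.1 htd⟩

theorem integral_abs_rescaleLp_sub_le (hS : IsDirichletSolutionOperator S) (hs : 0 < s)
    (hsr : s ≤ r) (hx : closedBall x r ⊆ Ω) :
    ∫ z in Ω, |(S (rescaleLp Ω m.kernel r x) - S (rescaleLp Ω m.kernel s x)) z| ≤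
      r * (∫ z, |m.potential z|) * r := by
  obtain ⟨σ, hσ, hinner⟩ :=
    exists_inner_eq_integral_abs (S (rescaleLp Ω m.kernel r x) - S (rescaleLp Ω m.kernel s x))
  obtain ⟨w, hw⟩ := hS σ
  rw [← hinner, inner_sub_left, hS.inner_comm, hS.inner_comm, real_inner_comm _ (rescaleLp _ _ r _),
    real_inner_comm _ (rescaleLp _ _ s _)]
  calc _ ≤ _ := le_abs_self _
    _ ≤ r * (∫ z, |m.potential z|) * (r - s) :=
      m.abs_inner_rescaleLp_sub_le hw hs hsr hx fun t ht =>
        abs_inner_rescaleLp_le hσ m.potential_eq_zero (hs.trans_le ht.1) x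
    _ ≤ r * (∫ z, |m.potential z|) * r := by
      have hr : 0 ≤ r := hs.le.trans hsr
      gcongr
      linarith

section Limit

variable [Nonempty (Fin n)]

theorem exists_seq_ae_eventually_eq_greenFunction (hS : IsDirichletSolutionOperator S)
    (hΩ : IsOpen Ω) (hr : 0 < r) (hx : closedBall x r ⊆ Ω) :
    ∃ s : ℕ → ℝ, (∀ k, s k ∈ Ioo 0 r) ∧ ∀ᵐ y ∂(volume.restrict Ω),
      ∀ᶠ k in atTop, S (rescaleLp Ω m.kernel (s k) x) y = greenFunction m S x y := by
  obtain ⟨s, -, hs, hlim⟩ := exists_seq_strictAnti_tendsto' hr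
  refine ⟨s, hs, ?_⟩
  have hne : ∀ᵐ y ∂(volume.restrict Ω), y ≠ x := ae_restrict_of_ae (by simp [ae_iff])
  filter_upwards [hne, ae_all_iff.2 fun k => hS.ae_eq_greenFunction m hΩ (hs k).1
    ((closedBall_subset_closedBall (hs k).2.le).trans hx)] with y hyx hy
  filter_upwards [hlim.eventually_lt_const (dist_pos.2 hyx.symm)] with k hk
  exact hy k hk

theorem integrable_sub_greenFunction_and_integral_le (hS : IsDirichletSolutionOperator S)
    (hΩ : IsOpen Ω) (hr : 0 < r) (hx : closedBall x r ⊆ Ω) :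
    Integrable (fun y => S (rescaleLp Ω m.kernel r x) y - greenFunction m S x y)
        (volume.restrict Ω) ∧
      ∫ y in Ω, |S (rescaleLp Ω m.kernel r x) y - greenFunction m S x y| ≤
        r * (∫ z, |m.potential z|) * r := by
  obtain ⟨s, hs, hlim⟩ := hS.exists_seq_ae_eventually_eq_greenFunction m hΩ hr hx
  let d : ℕ → Lp ℝ 2 (volume.restrict Ω) := fun k =>
    S (rescaleLp Ω m.kernel r x) - S (rescaleLp Ω m.kernel (s k) x)
  have hd : ∀ᵐ y ∂(volume.restrict Ω), Tendsto (fun k => d k y) atTop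
      (𝓝 (S (rescaleLp Ω m.kernel r x) y - greenFunction m S x y)) := by
    filter_upwards [hlim, ae_all_iff.2 fun k => Lp.coeFn_sub (S (rescaleLp Ω m.kernel r x))
      (S (rescaleLp Ω m.kernel (s k) x))] with y hy hsub
    refine tendsto_const_nhds.congr' (hy.mono fun k hk => ?_)
    dsimp only [d]
    rw [hsub k, Pi.sub_apply, hk]
  exact integrable_of_tendsto_of_integral_abs_le
    (fun k => (Lp.memLp (d k)).integrable one_le_two) hd
    fun k => hS.integral_abs_rescaleLp_sub_le m (hs k).1 (hs k).2.le hx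

theorem integrable_greenFunction (hS : IsDirichletSolutionOperator S) (hΩ : IsOpen Ω)
    (hx : x ∈ Ω) : Integrable (greenFunction m S x) (volume.restrict Ω) := by
  obtain ⟨r, hr, hxr⟩ := nhds_basis_closedBall.mem_iff.1 (hΩ.mem_nhds hx)
  have hu : Integrable (S (rescaleLp Ω m.kernel r x)) (volume.restrict Ω) :=
    (Lp.memLp _).integrable one_le_two
  refine (hu.sub (hS.integrable_sub_greenFunction_and_integral_le m hΩ hr hxr).1).congr ?_
  exact ae_of_all _ fun y => sub_sub_cancel _ _

theorem abs_inner_sub_integral_greenFunction_le (hS : IsDirichletSolutionOperator S)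
    (hΩ : IsOpen Ω) {f : Lp ℝ 2 (volume.restrict Ω)} {C : ℝ} (hC : 0 ≤ C)
    (hf : ∀ᵐ z ∂(volume.restrict Ω), |f z| ≤ C) (hr : 0 < r) (hx : closedBall x r ⊆ Ω) :
    |⟪S f, rescaleLp Ω m.kernel r x⟫ - ∫ y in Ω, greenFunction m S x y * f y| ≤
      r * (∫ z, |m.potential z|) * r * C := by
  have hu : Integrable (S (rescaleLp Ω m.kernel r x)) (volume.restrict Ω) :=
    (Lp.memLp _).integrable one_le_two
  have hG := hS.integrable_greenFunction m hΩ (hx (mem_closedBall_self hr.le))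
  obtain ⟨hint, hle⟩ := hS.integrable_sub_greenFunction_and_integral_le m hΩ hr hx
  have hinner : ⟪S f, rescaleLp Ω m.kernel r x⟫ =
      ∫ y in Ω, S (rescaleLp Ω m.kernel r x) y * f y := by
    rw [hS.inner_comm, L2.inner_def]
    rfl
  rw [hinner, ← integral_sub (hu.mul_bdd (Lp.aestronglyMeasurable f) hf)
    (hG.mul_bdd (Lp.aestronglyMeasurable f) hf)]
  calc _ ≤ ∫ y in Ω, |S (rescaleLp Ω m.kernel r x) y - greenFunction m S x y| * C := by
        rw [← Real.norm_eq_abs]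
        refine norm_integral_le_of_norm_le (hint.abs.mul_const C) ?_
        filter_upwards [hf] with z hz
        rw [← sub_mul, norm_mul]
        exact mul_le_mul_of_nonneg_left hz (abs_nonneg _)
    _ ≤ _ := by
        rw [integral_mul_const]
        exact mul_le_mul_of_nonneg_right hle hC

theorem ae_eq_integral_greenFunction_mul (hS : IsDirichletSolutionOperator S) (hΩ : IsOpen Ω)
    {f : Lp ℝ 2 (volume.restrict Ω)} {C : ℝ} (hC : 0 ≤ C)
    (hf : ∀ᵐ z ∂(volume.restrict Ω), |f z| ≤ C) :
    ∀ᵐ x ∂(volume.restrict Ω), S f x = ∫ y in Ω, greenFunction m S x y * f y := by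
  filter_upwards [m.ae_tendsto_inner_rescaleLp hΩ.measurableSet (S f),
    ae_restrict_mem hΩ.measurableSet] with x hlim hx
  obtain ⟨r, hr, hxr⟩ := nhds_basis_closedBall.mem_iff.1 (hΩ.mem_nhds hx)
  refine tendsto_nhds_unique hlim (tendsto_iff_norm_sub_tendsto_zero.2 ?_)
  have hzero : Tendsto (fun t : ℝ => t * (∫ z, |m.potential z|) * t * C) (𝓝[>] 0) (𝓝 0) := by
    refine (Continuous.tendsto' ?_ _ _ ?_).mono_left nhdsWithin_le_nhds
    · fun_prop
    · simp
  refine squeeze_zero' (Eventually.of_forall fun _ => norm_nonneg _) ?_ hzero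
  filter_upwards [Ioo_mem_nhdsGT hr] with t ht
  exact hS.abs_inner_sub_integral_greenFunction_le m hΩ hC hf ht.1
    ((closedBall_subset_closedBall ht.2.le).trans hxr)

end Limit

end IsDirichletSolutionOperator

end GreenFunction

section SobolevSpace

variable {Ω : Set (EuclideanSpace ℝ (Fin n))} {φ ψ u v : EuclideanSpace ℝ (Fin n) → ℝ}

theorem continuousOn_gradient (hΩ : IsOpen Ω) (hv : ContDiffOn ℝ 1 v Ω) :
    ContinuousOn (gradient v) Ω :=
  (InnerProductSpace.toDual ℝ 𝔼).symm.continuous.comp_continuousOn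
    (hv.continuousOn_fderiv_of_isOpen hΩ le_rfl)

theorem IsTestFun.fderiv_apply (hφ : IsTestFun Ω φ) (e : 𝔼) :
    IsTestFun Ω fun x => fderiv ℝ φ x e :=
  ⟨(hφ.1.fderiv_right (m := (⊤ : ℕ∞)) (by simp)).clm_apply contDiff_const,
    hφ.2.1.fderiv_apply (𝕜 := ℝ) e, (tsupport_fderiv_apply_subset ℝ e).trans hφ.2.2⟩

theorem IsTestFun.integrable_smul {F : Type*} [NormedAddCommGroup F] [NormedSpace ℝ F] {f : 𝔼 → F}
    (hφ : IsTestFun Ω φ) (hf : LocallyIntegrableOn f Ω volume) :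
    Integrable (fun x => φ x • f x) volume := by
  have hK : IsCompact (tsupport φ) := hφ.2.1
  refine (integrableOn_iff_integrable_of_support_subset ?_).1
    ((hf.integrableOn_compact_subset hφ.2.2 hK).continuousOn_smul hφ.1.continuous.continuousOn hK)
  exact (Function.support_smul_subset_left φ f).trans (subset_tsupport φ)

theorem IsTestFun.setIntegral_mul_inner_gradient (hψ : IsTestFun Ω ψ) (hΩ : IsOpen Ω)
    (hv : ContDiffOn ℝ 1 v Ω) (e : 𝔼) :
    ∫ x in Ω, ψ x * ⟪gradient v x, e⟫ = -∫ x in Ω, fderiv ℝ ψ x e * v x := by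
  have hv_int : LocallyIntegrableOn v Ω volume :=
    hv.continuousOn.locallyIntegrableOn hΩ.measurableSet
  have hdv_int : LocallyIntegrableOn (fun x => fderiv ℝ v x e) Ω volume :=
    ((hv.continuousOn_fderiv_of_isOpen hΩ le_rfl).clm_apply
      continuousOn_const).locallyIntegrableOn hΩ.measurableSet
  simp only [inner_gradient_left, mul_comm (ψ _), mul_comm (fderiv ℝ ψ _ _)]
  rw [setIntegral_eq_integral_of_forall_compl_eq_zero fun x hx => by
      rw [hψ.eq_zero_of_notMem hx, mul_zero],
    setIntegral_eq_integral_of_forall_compl_eq_zero fun x hx => by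
      rw [(hψ.fderiv_apply e).eq_zero_of_notMem hx, mul_zero],
    integral_mul_fderiv_eq_neg_fderiv_mul_of_integrable, neg_neg]
  · simpa only [smul_eq_mul, mul_comm] using hψ.integrable_smul hdv_int
  · simpa only [smul_eq_mul, mul_comm] using (hψ.fderiv_apply e).integrable_smul hv_int
  · simpa only [smul_eq_mul, mul_comm] using hψ.integrable_smul hv_int
  · exact fun x hx => (hv.contDiffAt (hΩ.mem_nhds (hψ.2.2 hx))).differentiableAt one_ne_zero
  · exact fun x _ => hψ.differentiable x

theorem IsTestFun.setIntegral_mul_inner_snd (hψ : IsTestFun Ω ψ) (hΩ : IsOpen Ω)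
    {p : Lp ℝ 2 (volume.restrict Ω) × Lp 𝔼 2 (volume.restrict Ω)}
    (hp : p ∈ sobolevClosure (testToLp Ω) (gradToLp Ω)) (e : 𝔼) :
    ∫ x in Ω, ψ x * ⟪p.2 x, e⟫ = -∫ x in Ω, fderiv ℝ ψ x e * p.1 x := by
  have hψe : MemLp (fun x => ψ x • e) 2 (volume.restrict Ω) :=
    ((hψ.1.continuous.smul continuous_const).memLp_of_hasCompactSupport
      hψ.2.1.smul_right).restrict Ω
  have hdψ := (hψ.fderiv_apply e).memLp 2 Ω
  have hleft : ∀ W : Lp 𝔼 2 (volume.restrict Ω),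
      ⟪W, hψe.toLp _⟫ = ∫ x in Ω, ψ x * ⟪W x, e⟫ := fun W => by
    rw [L2.inner_def]
    refine integral_congr_ae ?_
    filter_upwards [hψe.coeFn_toLp] with x hx
    rw [hx, inner_smul_right]
  have hright : ∀ U : Lp ℝ 2 (volume.restrict Ω),
      ⟪U, hdψ.toLp _⟫ = ∫ x in Ω, fderiv ℝ ψ x e * U x := fun U => by
    rw [L2.inner_def]
    refine integral_congr_ae ?_
    filter_upwards [hdψ.coeFn_toLp] with x hx
    rw [hx, RCLike.inner_apply, conj_trivial]
  rw [← hleft, ← hright]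
  refine sobolevClosure_induction (P := fun p => ⟪p.2, hψe.toLp _⟫ = -⟪p.1, hdψ.toLp _⟫)
    (isClosed_eq (by fun_prop) (by fun_prop)) (fun ⟨φ, (hφ : IsTestFun Ω φ)⟩ => ?_) hp
  simpa only [testToLp_mk, gradToLp_mk, real_inner_toLp, inner_smul_right, RCLike.inner_apply,
    conj_trivial] using
    hψ.setIntegral_mul_inner_gradient hΩ (hφ.1.of_le (by simp)).contDiffOn e

theorem gradient_ae_eq_of_mem_sobolevClosure (hΩ : IsOpen Ω) (hv : ContDiffOn ℝ 1 v Ω)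
    {U : Lp ℝ 2 (volume.restrict Ω)} {W : Lp 𝔼 2 (volume.restrict Ω)}
    (hUW : (U, W) ∈ sobolevClosure (testToLp Ω) (gradToLp Ω)) (hvU : v =ᵐ[volume.restrict Ω] U) :
    gradient v =ᵐ[volume.restrict Ω] W := by
  have hgrad : LocallyIntegrableOn (gradient v) Ω volume :=
    (continuousOn_gradient hΩ hv).locallyIntegrableOn hΩ.measurableSet
  have hW : LocallyIntegrableOn W Ω volume :=
    locallyIntegrableOn_of_locallyIntegrable_restrict ((Lp.memLp W).locallyIntegrable one_le_two)
  suffices h : ∀ᵐ x ∂(volume : Measure 𝔼), x ∈ Ω → (gradient v - W) x = 0 by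
    rw [Filter.EventuallyEq, ae_restrict_iff' hΩ.measurableSet]
    exact h.mono fun x hx hxΩ => sub_eq_zero.1 (hx hxΩ)
  refine hΩ.ae_eq_zero_of_integral_contDiff_smul_eq_zero (hgrad.sub hW) fun ψ h1 h2 h3 => ?_
  have hψ : IsTestFun Ω ψ := ⟨h1, h2, h3⟩
  have hint_grad := (hψ.integrable_smul hgrad).restrict (s := Ω)
  have hint_W := (hψ.integrable_smul hW).restrict (s := Ω)
  rw [← setIntegral_eq_integral_of_forall_compl_eq_zero fun x hx => by
    rw [hψ.eq_zero_of_notMem hx, zero_smul]]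
  simp only [Pi.sub_apply, smul_sub]
  rw [integral_sub hint_grad hint_W, sub_eq_zero]
  refine ext_inner_left ℝ fun e => ?_
  rw [← integral_inner hint_grad, ← integral_inner hint_W]
  simp only [real_inner_comm _ e, real_inner_smul_left]
  rw [hψ.setIntegral_mul_inner_gradient hΩ hv, hψ.setIntegral_mul_inner_snd hΩ hUW]
  congr 1
  exact integral_congr_ae (hvU.mono fun x hx => congrArg (fderiv ℝ ψ x e * ·) hx)

theorem tendsto_testToLp_gradToLp_iff (hu : MemLp u 2 (volume.restrict Ω))
    (hgrad : MemLp (gradient u) 2 (volume.restrict Ω)) (φ : ℕ → testSubmodule Ω) :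
    Tendsto (fun k => (testToLp Ω (φ k), gradToLp Ω (φ k))) atTop
        (𝓝 (hu.toLp u, hgrad.toLp (gradient u))) ↔
      Tendsto (fun k => eLpNorm (fun x => u x - (φ k).1 x) 2 (volume.restrict Ω)
        + eLpNorm (fun x => gradient u x - gradient (φ k).1 x) 2 (volume.restrict Ω))
        atTop (𝓝 0) := by
  rw [Prod.tendsto_iff]
  simp only [testToLp, gradToLp, LinearMap.coe_mk, AddHom.coe_mk]
  rw [Lp.tendsto_Lp_iff_tendsto_eLpNorm'', Lp.tendsto_Lp_iff_tendsto_eLpNorm'']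
  simp only [eLpNorm_sub_comm _ u, eLpNorm_sub_comm _ (gradient u)]
  refine ⟨fun h => ?_, fun h => ⟨?_, ?_⟩⟩
  · rw [← add_zero (0 : ℝ≥0∞)]
    exact h.1.add h.2
  · exact tendsto_of_tendsto_of_tendsto_of_le_of_le tendsto_const_nhds h
      (fun _ => zero_le) fun _ => le_self_add
  · exact tendsto_of_tendsto_of_tendsto_of_le_of_le tendsto_const_nhds h
      (fun _ => zero_le) fun _ => le_add_self

theorem memW120_iff_mem_sobolevClosure (hu : MemLp u 2 (volume.restrict Ω))
    (hgrad : MemLp (gradient u) 2 (volume.restrict Ω)) :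
    MemW120 Ω u ↔
      (hu.toLp u, hgrad.toLp (gradient u)) ∈ sobolevClosure (testToLp Ω) (gradToLp Ω) := by
  rw [sobolevClosure, ← SetLike.mem_coe, Submodule.topologicalClosure_coe,
    mem_closure_iff_seq_limit]
  constructor
  · rintro ⟨-, φ, hφ, hlim⟩
    exact ⟨_, fun k => ⟨⟨φ k, hφ k⟩, rfl⟩, (tendsto_testToLp_gradToLp_iff hu hgrad _).2 hlim⟩
  · rintro ⟨q, hq, hlim⟩
    choose φ hφ using hq
    obtain rfl : q = fun k => (testToLp Ω (φ k), gradToLp Ω (φ k)) := funext fun k => (hφ k).symm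
    exact ⟨⟨hu, hgrad⟩, fun k => φ k, fun k => (φ k).2,
      (tendsto_testToLp_gradToLp_iff hu hgrad φ).1 hlim⟩

theorem memW120_of_ae_eq_of_mem_sobolevClosure (hΩ : IsOpen Ω) (hv : ContDiffOn ℝ 1 v Ω)
    {p : Lp ℝ 2 (volume.restrict Ω) × Lp 𝔼 2 (volume.restrict Ω)}
    (hp : p ∈ sobolevClosure (testToLp Ω) (gradToLp Ω)) (hvp : v =ᵐ[volume.restrict Ω] p.1) :
    MemW120 Ω v := by
  have hgrad := gradient_ae_eq_of_mem_sobolevClosure hΩ hv hp hvp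
  rw [memW120_iff_mem_sobolevClosure ((memLp_congr_ae hvp).2 (Lp.memLp p.1))
    ((memLp_congr_ae hgrad).2 (Lp.memLp p.2))]
  convert hp
  exacts [Lp.ext ((MemLp.coeFn_toLp _).trans hvp), Lp.ext ((MemLp.coeFn_toLp _).trans hgrad)]

theorem exists_continuousLinearMap_ae_eq {α E F G : Type*} [MeasurableSpace α]
    [NormedAddCommGroup E] [NormedSpace ℝ E] [NormedAddCommGroup F] [NormedSpace ℝ F]
    [NormedAddCommGroup G] [NormedSpace ℝ G] {μ : Measure α} {p : ℝ≥0∞} [Fact (1 ≤ p)]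
    (B : E →L[ℝ] F →L[ℝ] G) {a : α → E} (ha : MemLp a ∞ μ) :
    ∃ M : Lp F p μ →L[ℝ] Lp G p μ, ∀ f : Lp F p μ, M f =ᵐ[μ] fun x => B (a x) (f x) := by
  refine ⟨B.holderL μ ∞ p p (ha.toLp a), fun f => ?_⟩
  filter_upwards [B.coeFn_holder (r := p) (ha.toLp a) f, ha.coeFn_toLp] with x hx hax
  rw [← hax]
  exact hx

theorem gradient_mul {a φ : 𝔼 → ℝ} {x : 𝔼} (ha : DifferentiableAt ℝ a x)
    (hφ : DifferentiableAt ℝ φ x) :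
    gradient (a * φ) x = a x • gradient φ x + φ x • gradient a x := by
  refine ext_inner_right ℝ fun v => ?_
  simp only [inner_add_left, real_inner_smul_left, inner_gradient_left, fderiv_mul ha hφ,
    _root_.add_apply, _root_.smul_apply, smul_eq_mul]

theorem exists_mem_sobolevClosure_mul {a : 𝔼 → ℝ} (ha : ContDiff ℝ (⊤ : ℕ∞) a)
    (ha_bdd : MemLp a ∞ (volume.restrict Ω)) (hgrad_bdd : MemLp (gradient a) ∞ (volume.restrict Ω))
    {p : Lp ℝ 2 (volume.restrict Ω) × Lp 𝔼 2 (volume.restrict Ω)}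
    (hp : p ∈ sobolevClosure (testToLp Ω) (gradToLp Ω)) :
    ∃ q ∈ sobolevClosure (testToLp Ω) (gradToLp Ω), q.1 =ᵐ[volume.restrict Ω] a * p.1 := by
  obtain ⟨M, hM⟩ := exists_continuousLinearMap_ae_eq (p := 2) (.mul ℝ ℝ) ha_bdd
  obtain ⟨N, hN⟩ := exists_continuousLinearMap_ae_eq (p := 2)
    (.lsmul ℝ ℝ : ℝ →L[ℝ] 𝔼 →L[ℝ] 𝔼) ha_bdd
  obtain ⟨K, hK⟩ := exists_continuousLinearMap_ae_eq (p := 2)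
    (ContinuousLinearMap.lsmul ℝ ℝ : ℝ →L[ℝ] 𝔼 →L[ℝ] 𝔼).flip hgrad_bdd
  refine ⟨(M p.1, N p.2 + K p.1), ?_, hM p.1⟩
  refine sobolevClosure_induction (P := fun p => (M p.1, N p.2 + K p.1) ∈ sobolevClosure _ _)
    ((Submodule.isClosed_topologicalClosure _).preimage (by fun_prop))
    (fun ⟨φ, (hφ : IsTestFun Ω φ)⟩ => ?_) hp
  have haφ := hφ.mul_left ha
  have hfst : M (testToLp Ω ⟨φ, hφ⟩) = testToLp Ω ⟨a * φ, haφ⟩ := by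
    refine Lp.ext ?_
    filter_upwards [hM (testToLp Ω ⟨φ, hφ⟩), (hφ.memLp 2 Ω).coeFn_toLp,
      (haφ.memLp 2 Ω).coeFn_toLp] with x hMx hφx haφx
    rw [hMx, testToLp_mk, testToLp_mk, hφx, haφx]
    rfl
  have hsnd : N (gradToLp Ω ⟨φ, hφ⟩) + K (testToLp Ω ⟨φ, hφ⟩) = gradToLp Ω ⟨a * φ, haφ⟩ := by
    refine Lp.ext ((Lp.coeFn_add _ _).trans ?_)
    filter_upwards [hN (gradToLp Ω ⟨φ, hφ⟩), hK (testToLp Ω ⟨φ, hφ⟩), (hφ.memLp 2 Ω).coeFn_toLp,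
      (hφ.memLp_gradient 2 Ω).coeFn_toLp, (haφ.memLp_gradient 2 Ω).coeFn_toLp]
      with x hNx hKx hφx hgradx haφx
    rw [Pi.add_apply, hNx, hKx, testToLp_mk, gradToLp_mk, gradToLp_mk, hφx, hgradx, haφx,
      gradient_mul (ha.differentiable (by simp) x) (hφ.differentiable x)]
    rfl
  rw [hfst, hsnd]
  exact mem_sobolevClosure _

end SobolevSpace

section Dirichlet

variable {Ω : Set (EuclideanSpace ℝ (Fin n))} {f u η : EuclideanSpace ℝ (Fin n) → ℝ}

theorem MemW120.isVariationalSol (hu : MemW120 Ω u) (hf : IsTestFun Ω f)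
    (hweak : ∀ v, IsTestFun Ω v →
      ∫ x in Ω, ⟪gradient u x, gradient v x⟫ = ∫ x in Ω, f x * v x) :
    IsVariationalSol (testToLp Ω) (gradToLp Ω) (testToLp Ω ⟨f, hf⟩) (hu.1.1.toLp u)
      (hu.1.2.toLp (gradient u)) where
  mem := (memW120_iff_mem_sobolevClosure hu.1.1 hu.1.2).1 hu
  weak := fun ⟨v, (hv : IsTestFun Ω v)⟩ => by
    rw [testToLp_mk, testToLp_mk, gradToLp_mk, real_inner_toLp, real_inner_toLp, hweak v hv]
    simp only [RCLike.inner_apply, conj_trivial, mul_comm]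

theorem exists_isDirichletSolutionOperator [Nonempty (Fin n)] (hΩ : volume Ω ≠ ∞) :
    ∃ S : Lp ℝ 2 (volume.restrict Ω) →L[ℝ] Lp ℝ 2 (volume.restrict Ω),
      IsDirichletSolutionOperator S :=
  let ⟨_, hC⟩ := exists_norm_testToLp_le hΩ
  exists_variational_solution_operator hC

namespace IsDirichletSolutionOperator

variable {S : Lp ℝ 2 (volume.restrict Ω) →L[ℝ] Lp ℝ 2 (volume.restrict Ω)}

theorem ae_eq_of_memW120 [Nonempty (Fin n)] (hS : IsDirichletSolutionOperator S)
    (hΩ : volume Ω ≠ ∞) (hu : MemW120 Ω u) (hf : IsTestFun Ω f)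
    (hweak : ∀ v, IsTestFun Ω v →
      ∫ x in Ω, ⟪gradient u x, gradient v x⟫ = ∫ x in Ω, f x * v x) :
    u =ᵐ[volume.restrict Ω] S (testToLp Ω ⟨f, hf⟩) := by
  obtain ⟨C, hC⟩ := exists_norm_testToLp_le hΩ
  obtain ⟨w, hw⟩ := hS (testToLp Ω ⟨f, hf⟩)
  rw [← (hu.isVariationalSol hf hweak).unique hC hw]
  exact hu.1.1.coeFn_toLp.symm

theorem ae_eq_integral_greenFunction_mul_of_memW120 [Nonempty (Fin n)]
    [IsFiniteMeasure (volume.restrict Ω)] (m : RadialMollifier (volume : Measure 𝔼))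
    (hS : IsDirichletSolutionOperator S) (hΩo : IsOpen Ω) (hΩ : volume Ω ≠ ∞) (hu : MemW120 Ω u)
    (hf : IsTestFun Ω f) (hweak : ∀ v, IsTestFun Ω v →
      ∫ x in Ω, ⟪gradient u x, gradient v x⟫ = ∫ x in Ω, f x * v x) :
    ∀ᵐ x ∂(volume.restrict Ω), u x = ∫ y in Ω, greenFunction m S x y * f y := by
  obtain ⟨C, hC⟩ := hf.2.1.exists_bound_of_continuous hf.1.continuous
  have hf_ae : testToLp Ω ⟨f, hf⟩ =ᵐ[volume.restrict Ω] f := (hf.memLp 2 Ω).coeFn_toLp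
  have hf_le : ∀ᵐ y ∂(volume.restrict Ω), |testToLp Ω ⟨f, hf⟩ y| ≤ C :=
    hf_ae.mono fun y hy => hy.symm ▸ hC y
  filter_upwards [hS.ae_eq_of_memW120 hΩ hu hf hweak,
    hS.ae_eq_integral_greenFunction_mul m hΩo ((norm_nonneg _).trans (hC 0)) hf_le] with x hux hSx
  rw [hux, hSx]
  exact integral_congr_ae (hf_ae.mono fun y hy => congrArg (greenFunction m S x y * ·) hy)

theorem contDiffOn_one_sub_mul_greenFunction [IsFiniteMeasure (volume.restrict Ω)]
    (m : RadialMollifier (volume : Measure 𝔼)) (hS : IsDirichletSolutionOperator S)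
    (hΩ : IsOpen Ω) {y : 𝔼} (hy : y ∈ Ω) (hη : ContDiff ℝ 1 η) (hη_one : η =ᶠ[𝓝 y] 1) :
    ContDiffOn ℝ 1 (fun x => (1 - η x) * greenFunction m S x y) Ω := by
  refine fun x hx => ContDiffAt.contDiffWithinAt ?_
  rcases eq_or_ne x y with rfl | hxy
  · refine (contDiffAt_const (c := (0 : ℝ))).congr_of_eventuallyEq ?_
    filter_upwards [hη_one] with z hz
    rw [hz, Pi.one_apply, sub_self, zero_mul]
  · have hG : ContDiffAt ℝ (⊤ : ℕ∞) (fun x => greenFunction m S x y) x :=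
      (hS.contDiffAt_greenFunction m hΩ hx hy hxy).comp (f := fun x => (x, y)) x
        (contDiffAt_id.prodMk contDiffAt_const)
    exact (contDiff_const.sub hη).contDiffAt.mul (hG.of_le (by simp))

theorem memW120_one_sub_mul_greenFunction [IsFiniteMeasure (volume.restrict Ω)]
    (m : RadialMollifier (volume : Measure 𝔼)) (hS : IsDirichletSolutionOperator S)
    (hΩ : IsOpen Ω) {y : 𝔼} (hy : y ∈ Ω) (hη : ContDiff ℝ (⊤ : ℕ∞) η)
    (hη_supp : HasCompactSupport η) (hη_one : η =ᶠ[𝓝 y] 1) :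
    MemW120 Ω fun x => (1 - η x) * greenFunction m S x y := by
  obtain ⟨s, hs, hball⟩ := nhds_basis_closedBall.mem_iff.1
    (inter_mem (hΩ.mem_nhds hy) hη_one)
  have hηt : IsTestFun univ η := ⟨hη, hη_supp, subset_univ _⟩
  have ha : ContDiff ℝ (⊤ : ℕ∞) (1 - η) := contDiff_const.sub hη
  have ha_bdd : MemLp (1 - η) ∞ (volume.restrict Ω) := (memLp_top_const 1).sub (hηt.memLp ∞ Ω)
  have hgrad : gradient (1 - η) = -gradient η := by
    ext1 x
    rw [gradient, Pi.neg_apply, gradient, ← map_neg]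
    congr 1
    exact fderiv_const_sub 1
  obtain ⟨w, hw⟩ := hS (rescaleLp Ω m.kernel s y)
  obtain ⟨q, hq, hqS⟩ := exists_mem_sobolevClosure_mul ha ha_bdd
    (hgrad ▸ (hηt.memLp_gradient ∞ Ω).neg) hw.mem
  refine memW120_of_ae_eq_of_mem_sobolevClosure hΩ
    (hS.contDiffOn_one_sub_mul_greenFunction m hΩ hy (hη.of_le (by simp)) hη_one) hq ?_
  · filter_upwards [hqS, hS.ae_eq_greenFunction m hΩ hs (hball.trans inter_subset_left),
      ae_restrict_mem hΩ.measurableSet] with x hqx hGx hx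
    rw [hqx, Pi.mul_apply, Pi.sub_apply, Pi.one_apply]
    by_cases hxs : x ∈ closedBall y s
    · have : η x = 1 := (hball hxs).2
      rw [this, sub_self, zero_mul, zero_mul]
    · rw [mem_closedBall', not_le] at hxs
      rw [hGx hxs, hS.greenFunction_comm m hΩ hx hy (dist_pos.1 (hs.trans hxs)).symm]

end IsDirichletSolutionOperator

theorem nonempty_fin_of_exists_weak_solution (hΩ : Ω.Nonempty)
    (h : ∀ f, IsTestFun Ω f → ∃ u : 𝔼 → ℝ, ∀ v, IsTestFun Ω v →
      ∫ x in Ω, ⟪gradient u x, gradient v x⟫ = ∫ x in Ω, f x * v x) : Nonempty (Fin n) := by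
  by_contra hn
  rw [not_nonempty_iff] at hn
  obtain rfl : Ω = univ := Subsingleton.eq_univ_of_nonempty hΩ
  have hone : IsTestFun univ (1 : 𝔼 → ℝ) :=
    ⟨contDiff_const, .of_compactSpace _, subset_univ _⟩
  obtain ⟨u, hu⟩ := h 1 hone
  have hvol : volume.real (univ : Set 𝔼) = 0 := by
    simpa [Subsingleton.elim (gradient _ _) (0 : 𝔼)] using (hu 1 hone).symm
  exact (ENNReal.toReal_pos (isOpen_univ.measure_pos volume univ_nonempty).ne'
    isCompact_univ.measure_lt_top.ne).ne' hvol

end Dirichlet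

theorem dirichlet_green_function_exists_general {Ω : Set 𝔼} (hΩo : IsOpen Ω) (hΩ : volume Ω ≠ ∞)
    {T : (𝔼 → ℝ) → 𝔼 → ℝ}
    (hT : ∀ f, IsTestFun Ω f → MemW120 Ω (T f) ∧ ∀ v, IsTestFun Ω v →
      ∫ x in Ω, ⟪gradient (T f) x, gradient v x⟫ = ∫ x in Ω, f x * v x) :
    ∃ G : 𝔼 → 𝔼 → ℝ,
      ContDiffOn ℝ (⊤ : ℕ∞) (fun p : 𝔼 × 𝔼 => G p.1 p.2) ((Ω ×ˢ Ω) \ {p | p.1 = p.2}) ∧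
      (∀ y ∈ Ω, ∀ η : 𝔼 → ℝ, ContDiff ℝ (⊤ : ℕ∞) η → HasCompactSupport η → η =ᶠ[𝓝 y] 1 →
        MemW120 Ω fun x => (1 - η x) * G x y) ∧
      (∀ x ∈ Ω, ∀ y ∈ Ω, y ≠ x → G x y = G y x) ∧
      (∀ x ∈ Ω, IntegrableOn (fun y => G x y) Ω) ∧
      (∀ f, IsTestFun Ω f → ∀ᵐ x ∂(volume.restrict Ω), T f x = ∫ y in Ω, G x y * f y) := by
  rcases Ω.eq_empty_or_nonempty with rfl | hne
  · exact ⟨0, by simp⟩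
  have : Nonempty (Fin n) :=
    nonempty_fin_of_exists_weak_solution hne fun f hf => ⟨T f, (hT f hf).2⟩
  have : IsFiniteMeasure (volume.restrict Ω) := ⟨by simpa using hΩ.lt_top⟩
  obtain ⟨S, hS⟩ := exists_isDirichletSolutionOperator hΩ
  obtain ⟨m⟩ := exists_radialMollifier (volume : Measure 𝔼)
  refine ⟨greenFunction m S, ?_, ?_, ?_, ?_, ?_⟩
  · rintro ⟨x, y⟩ ⟨⟨hx, hy⟩, hxy⟩
    exact (hS.contDiffAt_greenFunction m hΩo hx hy hxy).contDiffWithinAt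
  · exact fun y hy η => hS.memW120_one_sub_mul_greenFunction m hΩo hy
  · exact fun x hx y hy hyx => hS.greenFunction_comm m hΩo hx hy hyx.symm
  · exact fun x hx => hS.integrable_greenFunction m hΩo hx
  · exact fun f hf => hS.ae_eq_integral_greenFunction_mul_of_memW120 m hΩo hΩ (hT f hf).1 hf
      (hT f hf).2

/-- **Existence of the Dirichlet Green's function** (Shen, Theorem 1.2.2): for a bounded
domain `Ω` and the weak solution operator `T`, there is a kernel `G(x,y)` on `Ω × Ω` that is
(a) smooth off the diagonal, (b) in `W^{1,2}_0(Ω)` after cutting off around the pole,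
(c) symmetric, and (d) integrable in the second variable and representing `T` on
`C_c^∞(Ω)` data. -/
theorem dirichlet_green_function_exists
    (Ω : Set (EuclideanSpace ℝ (Fin n)))
    (hΩo : IsOpen Ω) (hΩconn : IsConnected Ω) (hΩbd : IsBounded Ω)
    (T : (EuclideanSpace ℝ (Fin n) → ℝ) → (EuclideanSpace ℝ (Fin n) → ℝ))
    (hT : ∀ f, IsTestFun Ω f → MemW120 Ω (T f) ∧
      ∀ v, MemW120 Ω v →
        ∫ x in Ω, ⟪gradient (T f) x, gradient v x⟫ = ∫ x in Ω, f x * v x) :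
    ∃ G : EuclideanSpace ℝ (Fin n) → EuclideanSpace ℝ (Fin n) → ℝ,
      -- (a) smooth off the diagonal
      ContDiffOn ℝ (⊤ : ℕ∞) (fun p : EuclideanSpace ℝ (Fin n) × EuclideanSpace ℝ (Fin n) => G p.1 p.2)
        ((Ω ×ˢ Ω) \ {p | p.1 = p.2}) ∧
      -- (b) zero boundary values away from the pole
      (∀ y ∈ Ω, ∀ ηy : EuclideanSpace ℝ (Fin n) → ℝ,
        ContDiff ℝ (⊤ : ℕ∞) ηy → HasCompactSupport ηy → tsupport ηy ⊆ Ω → (∀ x, 0 ≤ ηy x) →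
        (∃ ε > (0 : ℝ), Set.EqOn ηy 1 (ball y ε)) →
        MemW120 Ω (fun x => (1 - ηy x) * G x y)) ∧
      -- (c) symmetry
      (∀ x ∈ Ω, ∀ y ∈ Ω, y ≠ x → G x y = G y x) ∧
      -- (d) integrability and representation of `T` on smooth compactly supported data
      (∀ x ∈ Ω, IntegrableOn (fun y => G x y) Ω) ∧
      (∀ f, IsTestFun Ω f →
        ∀ᵐ x ∂(volume.restrict Ω), T f x = ∫ y in Ω, G x y * f y) := by
  obtain ⟨G, hsmooth, hbdry, hrest⟩ := dirichlet_green_function_exists_general hΩo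
    hΩbd.measure_lt_top.ne fun f hf => ⟨(hT f hf).1, fun v hv => (hT f hf).2 v hv.memW120⟩
  exact ⟨G, hsmooth, fun y hy η hη hη_supp _ _ ⟨ε, hε, hη_one⟩ =>
    hbdry y hy η hη hη_supp (hη_one.eventuallyEq_of_mem (ball_mem_nhds y hε)), hrest⟩

end
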